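/- arXiv:1205.4821 — 7 statements merged into one kernel-verified Lean document; each statement's English description precedes it below -/
import Mathlib

section
/- Let α be a real number with 1 − log 2/log 3 ≤ α ≤ 1. There exists a closed set F ⊆ ℝ with Hausdorff dimension at most α such that for every r ∈ [0,1], the Hausdorff dimension of (𝒞 + r) ∩ F is at least α − 1 + log 2/log 3. -/
/-- The middle-thirds Cantor set: reals admitting a ternary expansion
`∑_{n≥1} aₙ 3⁻ⁿ` with every digit `aₙ ∈ {0, 2}`. -/
def ternaryCantorSet : Set ℝ :=
  {x | ∃ a : ℕ → ℝ, (∀ n, a n = 0 ∨ a n = 2) ∧ x = ∑' n : ℕ, a n / 3 ^ (n + 1)}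

/-!
Consider base-`b` expansions with digits in a set `D` that contains no two consecutive integers,
put `κ = log #D / log b` and write `α = 1 - (1 - θ) κ`, so that `α - 1 + κ = θ κ`. Cut the digit
positions into the blocks `[K ^ 2, (K + 1) ^ 2)`, and call a proportion `θ` of each block free.

A greedy choice gives, for every `n`, a set `B` of only about `n (b / #D) ^ n` integers such that
every `t < b ^ n` satisfies `t + a ∈ B` for some `a` whose `n` digits lie in `D`. Let `F` be
essentially the set of sums of two expansions whose non-free digits form, in each block, a number
in such a `B`. Counting prefixes of length `K ^ 2` gives `dim F ≤ α`: the polynomial factors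
multiply up to `exp (O (K log K))`, which is negligible against `b ^ (K ^ 2)`.

Given `r`, choose the non-free digits of `x` block by block so that those of `x + r` land in `B`;
the free digits of `x` remain arbitrary. Because `D` has gaps, the number in `[0, 1]` spelled by the
free digits in base `#D` is a Hölder function of `x`, with exponent `θ κ` up to an arbitrarily
small loss, so these `x` form a set of dimension at least `θ κ`.
-/

open Filter Finset Topology
open scoped ENNReal NNReal

section HausdorffDimension

theorem dimH_le_of_eventually_card_mul_rpow_le {X : Type*} [EMetricSpace X] {E : Set X}
    {ι : ℕ → Type*} [∀ n, Fintype (ι n)] {t : ∀ n, ι n → Set X} {δ : ℕ → ℝ≥0∞} {s C : ℝ≥0}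
    (hδ : Tendsto δ atTop (𝓝 0)) (hdiam : ∀ n i, Metric.ediam (t n i) ≤ δ n)
    (hcover : ∀ n, E ⊆ ⋃ i, t n i)
    (hcard : ∀ᶠ n in atTop, (Fintype.card (ι n) : ℝ≥0∞) * δ n ^ (s : ℝ) ≤ C) :
    dimH E ≤ s := by
  borelize X
  refine dimH_le_of_hausdorffMeasure_ne_top
    (ne_top_of_le_ne_top (b := (C : ℝ≥0∞)) ENNReal.coe_ne_top ?_)
  calc MeasureTheory.Measure.hausdorffMeasure (s : ℝ) E
      ≤ liminf (fun n ↦ ∑ i, Metric.ediam (t n i) ^ (s : ℝ)) atTop :=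
        MeasureTheory.Measure.hausdorffMeasure_le_liminf_sum _ _ δ hδ t (.of_forall hdiam)
          (.of_forall hcover)
    _ ≤ liminf (fun _ : ℕ ↦ (C : ℝ≥0∞)) atTop := by
        refine liminf_le_liminf (hcard.mono fun n hn ↦ le_trans ?_ hn)
        rw [← nsmul_eq_mul]
        exact sum_le_card_nsmul _ _ _ fun i _ ↦ ENNReal.rpow_le_rpow (hdiam n i) s.coe_nonneg
    _ = C := liminf_const _

theorem mul_dimH_range_le_of_edist_le {ι X Y : Type*} [EMetricSpace X] [EMetricSpace Y]
    {φ : ι → X} {ψ : ι → Y} {C s : ℝ≥0} (hs : 0 < s)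
    (h : ∀ w w', edist (ψ w) (ψ w') ≤ C * edist (φ w) (φ w') ^ (s : ℝ)) :
    s * dimH (Set.range ψ) ≤ dimH (Set.range φ) := by
  rcases isEmpty_or_nonempty ι with hι | hι
  · simp [Set.range_eq_empty]
  have hψ : ∀ w, ψ (Function.invFun φ (φ w)) = ψ w := fun w ↦ by
    have := h (Function.invFun φ (φ w)) w
    rwa [Function.invFun_eq (f := φ) ⟨w, rfl⟩, edist_self,
      ENNReal.zero_rpow_of_pos (by exact_mod_cast hs), mul_zero, nonpos_iff_eq_zero,
      edist_eq_zero] at this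
  have hholder : HolderOnWith C s (ψ ∘ Function.invFun φ) (Set.range φ) := by
    rintro _ ⟨w, rfl⟩ _ ⟨w', rfl⟩
    simpa only [Function.comp_apply, hψ] using h w w'
  have himage : (ψ ∘ Function.invFun φ) '' Set.range φ = Set.range ψ := by
    rw [← Set.range_comp]
    exact congrArg Set.range (funext hψ)
  have := hholder.dimH_image_le hs
  rwa [himage, ENNReal.le_div_iff_mul_le (.inl (by exact_mod_cast hs.ne')) (.inl (by simp)),
    mul_comm] at this

end HausdorffDimension

section HittingSets

variable {α β : Type*} {r : α → β → Prop} {S : Finset α} {T : Finset β} {d : ℕ}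

theorem exists_mem_card_filter_not_le [∀ a b, Decidable (r a b)] (hT : T.Nonempty)
    (hd : ∀ a ∈ S, d ≤ #{b ∈ T | r a b}) :
    ∃ b ∈ T, (#{a ∈ S | ¬ r a b} : ℝ) ≤ #S * (1 - d / #T) := by
  have hT0 : (#T : ℝ) ≠ 0 := by exact_mod_cast hT.card_pos.ne'
  have hcount : (#S * d : ℝ) ≤ ∑ b ∈ T, (#{a ∈ S | r a b} : ℝ) := by
    have := sum_le_sum hd
    rw [sum_const, smul_eq_mul] at this
    exact_mod_cast this.trans_eq (sum_card_bipartiteAbove_eq_sum_card_bipartiteBelow r)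
  obtain ⟨b, hb, hle⟩ : ∃ b ∈ T, (#S * d / #T : ℝ) ≤ #{a ∈ S | r a b} := by
    refine exists_le_of_sum_le hT (le_trans (le_of_eq ?_) hcount)
    rw [sum_const, nsmul_eq_mul, mul_div_cancel₀ _ hT0]
  have hsplit : (#{a ∈ S | r a b} : ℝ) + #{a ∈ S | ¬ r a b} = #S := by
    exact_mod_cast card_filter_add_card_filter_not (s := S) (r · b)
  refine ⟨b, hb, ?_⟩
  rw [mul_sub, mul_one, ← mul_div_assoc]
  linarith

theorem exists_card_le_card_filter_forall_not_le [∀ a b, Decidable (r a b)] (hT : T.Nonempty)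
    (hd : ∀ a ∈ S, d ≤ #{b ∈ T | r a b}) (k : ℕ) :
    ∃ B : Finset β, #B ≤ k ∧ (#{a ∈ S | ∀ b ∈ B, ¬ r a b} : ℝ) ≤ #S * (1 - d / #T) ^ k := by
  classical
  rcases S.eq_empty_or_nonempty with rfl | ⟨a₀, ha₀⟩
  · exact ⟨∅, by simp⟩
  have hratio : (d / #T : ℝ) ≤ 1 :=
    div_le_one_of_le₀ (by exact_mod_cast (hd a₀ ha₀).trans (card_filter_le _ _)) (by positivity)
  induction k with
  | zero => exact ⟨∅, by simp⟩
  | succ k ih =>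
    obtain ⟨B, hBk, hB⟩ := ih
    obtain ⟨b, -, hb⟩ := exists_mem_card_filter_not_le (S := {a ∈ S | ∀ b ∈ B, ¬ r a b}) hT
      fun a ha ↦ hd a (mem_of_mem_filter a ha)
    refine ⟨insert b B, (card_insert_le _ _).trans (by lia), ?_⟩
    calc (#{a ∈ S | ∀ b' ∈ insert b B, ¬ r a b'} : ℝ)
        = #{a ∈ {a ∈ S | ∀ b ∈ B, ¬ r a b} | ¬ r a b} := by
          simp only [forall_mem_insert, filter_filter, and_comm]
      _ ≤ #{a ∈ S | ∀ b ∈ B, ¬ r a b} * (1 - d / #T) := hb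
      _ ≤ #S * (1 - d / #T) ^ k * (1 - d / #T) := by gcongr
      _ = #S * (1 - d / #T) ^ (k + 1) := by rw [pow_succ, mul_assoc]

theorem exists_card_le_forall_exists_of_log_lt [∀ a b, Decidable (r a b)] (hT : T.Nonempty)
    (hd : ∀ a ∈ S, d ≤ #{b ∈ T | r a b}) {k : ℕ} (hk : Real.log #S < k * (d / #T)) :
    ∃ B : Finset β, #B ≤ k ∧ ∀ a ∈ S, ∃ b ∈ B, r a b := by
  rcases S.eq_empty_or_nonempty with rfl | ⟨a₀, ha₀⟩
  · exact ⟨∅, by simp⟩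
  obtain ⟨B, hBk, hB⟩ := exists_card_le_card_filter_forall_not_le hT hd k
  have hS : (0 : ℝ) < #S := by exact_mod_cast card_pos.2 ⟨a₀, ha₀⟩
  have hratio : (d / #T : ℝ) ≤ 1 :=
    div_le_one_of_le₀ (by exact_mod_cast (hd a₀ ha₀).trans (card_filter_le _ _)) (by positivity)
  have hlt : (#{a ∈ S | ∀ b ∈ B, ¬ r a b} : ℝ) < 1 := by
    calc (#{a ∈ S | ∀ b ∈ B, ¬ r a b} : ℝ) ≤ #S * (1 - d / #T) ^ k := hB
      _ ≤ Real.exp (Real.log #S) * Real.exp (-(d / #T)) ^ k := by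
          rw [Real.exp_log hS]
          gcongr
          exact Real.one_sub_le_exp_neg _
      _ = Real.exp (Real.log #S + k * -(d / #T)) := by rw [Real.exp_add, Real.exp_nat_mul]
      _ < 1 := by rw [Real.exp_lt_one_iff]; linarith
  have hempty : {a ∈ S | ∀ b ∈ B, ¬ r a b} = ∅ := by
    rw [← card_eq_zero]
    exact Nat.lt_one_iff.1 (by exact_mod_cast hlt)
  simp only [filter_eq_empty_iff, not_forall, not_not, exists_prop] at hempty
  exact ⟨B, hBk, fun a ha ↦ hempty ha⟩

theorem exists_card_le_forall_exists_add_mem {m : ℕ} {A : Finset ℕ} (hA : A.Nonempty)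
    (hAm : ∀ a ∈ A, a < m) :
    ∃ B : Finset ℕ, (#B : ℝ) ≤ 2 * m * Real.log m / #A + 1 ∧ ∀ t < m, ∃ a ∈ A, t + a ∈ B := by
  obtain ⟨a₀, ha₀⟩ := hA
  have hm : 0 < m := (Nat.zero_le a₀).trans_lt (hAm a₀ ha₀)
  have hA0 : (0 : ℝ) < #A := by exact_mod_cast card_pos.2 ⟨a₀, ha₀⟩
  have hd : ∀ t ∈ range m, #A ≤ #{b ∈ range (2 * m) | b ∈ A.map (addLeftEmbedding t)} := by
    intro t ht
    rw [← card_map (addLeftEmbedding t)]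
    refine card_le_card fun b hb ↦ mem_filter.2 ⟨?_, hb⟩
    obtain ⟨a, ha, rfl⟩ := mem_map.1 hb
    have := hAm a ha
    simp only [mem_range, addLeftEmbedding_apply] at ht ⊢
    lia
  have hlog : Real.log #(range m) <
      (⌊2 * m * Real.log m / #A⌋₊ + 1 : ℕ) * ((#A : ℝ) / #(range (2 * m))) := by
    have := Nat.lt_floor_add_one (2 * m * Real.log m / #A)
    rw [div_lt_iff₀ hA0] at this
    simp only [card_range]
    push_cast
    rw [mul_div_assoc', lt_div_iff₀ (by positivity)]
    linarith
  obtain ⟨B, hBk, hB⟩ := exists_card_le_forall_exists_of_log_lt ⟨0, by simp [hm]⟩ hd hlog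
  refine ⟨B, ?_, fun t ht ↦ ?_⟩
  · calc (#B : ℝ) ≤ (⌊2 * m * Real.log m / #A⌋₊ + 1 : ℕ) := by exact_mod_cast hBk
      _ ≤ 2 * m * Real.log m / #A + 1 := by
          push_cast
          gcongr
          exact Nat.floor_le (by positivity)
  · obtain ⟨_, hb, hmem⟩ := hB t (mem_range.2 ht)
    obtain ⟨a, ha, rfl⟩ := mem_map.1 hmem
    exact ⟨a, ha, hb⟩

end HittingSets

section DigitSeries

/-- The real number with base-`b` digits `d 0, d 1, …` after the radix point. Unlike in
`Real.ofDigits`, digits may exceed `b - 1`, so that expansions can be added without carrying. -/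
noncomputable def digitSeries (b : ℕ) (d : ℕ → ℕ) : ℝ :=
  ∑' n, (d n : ℝ) / b ^ (n + 1)

/-- The integer with base-`b` digits `d 0, …, d (n - 1)`, most significant digit first, again
allowing digits above `b - 1`. -/
def digitPrefix (b : ℕ) (d : ℕ → ℕ) : ℕ → ℕ
  | 0 => 0
  | n + 1 => b * digitPrefix b d n + d n

variable {b M : ℕ} {d : ℕ → ℕ}

theorem digitSeries_eq_ofDigits (w : ℕ → Fin b) :
    digitSeries b (fun i ↦ w i) = Real.ofDigits w := by
  simp only [digitSeries, Real.ofDigits, Real.ofDigitsTerm, div_eq_mul_inv]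

theorem digitPrefix_congr {d' : ℕ → ℕ} {n : ℕ} (h : ∀ i < n, d i = d' i) :
    digitPrefix b d n = digitPrefix b d' n := by
  induction n with
  | zero => rfl
  | succ n ih => rw [digitPrefix, digitPrefix, ih fun i hi ↦ h i (by lia), h n (by lia)]

theorem digitPrefix_add_index (m n : ℕ) :
    digitPrefix b d (m + n) = b ^ n * digitPrefix b d m + digitPrefix b (fun i ↦ d (m + i)) n := by
  induction n with
  | zero => simp [digitPrefix]
  | succ n ih => rw [← add_assoc, digitPrefix, ih, digitPrefix]; ring

theorem digitPrefix_add (d d' : ℕ → ℕ) (n : ℕ) :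
    digitPrefix b (d + d') n = digitPrefix b d n + digitPrefix b d' n := by
  induction n with
  | zero => rfl
  | succ n ih => rw [digitPrefix, ih, digitPrefix, digitPrefix, Pi.add_apply]; ring

theorem digitPrefix_add_le (hd : ∀ i, d i + M ≤ M * b) (n : ℕ) :
    digitPrefix b d n + M ≤ M * b ^ n := by
  induction n with
  | zero => simp [digitPrefix]
  | succ n ih =>
    calc digitPrefix b d (n + 1) + M = b * digitPrefix b d n + (d n + M) := by
          rw [digitPrefix, add_assoc]
      _ ≤ b * digitPrefix b d n + M * b := by gcongr; exact hd n
      _ = b * (digitPrefix b d n + M) := by ring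
      _ ≤ b * (M * b ^ n) := by gcongr
      _ = M * b ^ (n + 1) := by ring

theorem digitPrefix_div_pow (hb : b ≠ 0) (n : ℕ) :
    (digitPrefix b d n : ℝ) / b ^ n = ∑ i ∈ range n, (d i : ℝ) / b ^ (i + 1) := by
  induction n with
  | zero => simp [digitPrefix]
  | succ n ih =>
    rw [sum_range_succ, ← ih, digitPrefix]
    push_cast
    field_simp
    ring

theorem hasSum_mul_sub_one_div_pow (hb : 1 < b) (M : ℝ) :
    HasSum (fun n : ℕ ↦ M * (b - 1) / (b : ℝ) ^ (n + 1)) M := by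
  have hb' : (1 : ℝ) < b := by exact_mod_cast hb
  have hb0 : (b : ℝ) - 1 ≠ 0 := by linarith
  convert! (hasSum_geometric_of_lt_one (by positivity) (inv_lt_one_of_one_lt₀ hb')).mul_left
    (M * (b - 1) / b) using 1
  · ext n
    rw [inv_pow, pow_succ]
    field_simp
  · field_simp

theorem digit_div_pow_le (hd : ∀ i, d i + M ≤ M * b) (n : ℕ) :
    (d n : ℝ) / b ^ (n + 1) ≤ M * (b - 1) / (b : ℝ) ^ (n + 1) := by
  have : (d n : ℝ) + M ≤ M * b := by exact_mod_cast hd n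
  gcongr
  linarith

theorem summable_digit_div_pow (hb : 1 < b) (hd : ∀ i, d i + M ≤ M * b) :
    Summable fun n ↦ (d n : ℝ) / b ^ (n + 1) :=
  .of_nonneg_of_le (fun n ↦ by positivity) (digit_div_pow_le hd)
    (hasSum_mul_sub_one_div_pow hb M).summable

theorem digitSeries_nonneg : 0 ≤ digitSeries b d :=
  tsum_nonneg fun n ↦ by positivity

theorem digitSeries_le (hb : 1 < b) (hd : ∀ i, d i + M ≤ M * b) : digitSeries b d ≤ M :=
  (summable_digit_div_pow hb hd).tsum_le_of_sum_le fun s ↦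
    (sum_le_sum fun n _ ↦ digit_div_pow_le hd n).trans <|
      sum_le_hasSum s (fun n _ ↦ (by positivity : (0 : ℝ) ≤ d n / b ^ (n + 1)).trans
        (digit_div_pow_le hd n)) (hasSum_mul_sub_one_div_pow hb M)

theorem digitSeries_add {d' : ℕ → ℕ} (hb : 1 < b) (hd : ∀ i, d i + M ≤ M * b)
    (hd' : ∀ i, d' i + M ≤ M * b) :
    digitSeries b (d + d') = digitSeries b d + digitSeries b d' := by
  rw [digitSeries, digitSeries, digitSeries,
    ← (summable_digit_div_pow hb hd).tsum_add (summable_digit_div_pow hb hd')]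
  simp only [Pi.add_apply, Nat.cast_add, add_div]

theorem digitSeries_eq_prefix_add_tail (hb : 1 < b) (hd : ∀ i, d i + M ≤ M * b) (n : ℕ) :
    digitSeries b d = (digitPrefix b d n + digitSeries b fun i ↦ d (n + i)) / b ^ n := by
  rw [add_div, digitPrefix_div_pow (by lia), digitSeries,
    ← (summable_digit_div_pow hb hd).sum_add_tsum_nat_add n, digitSeries, ← tsum_div_const]
  congr 2 with i
  rw [div_div, ← pow_add, add_comm i n]
  congr 2
  lia

theorem digitSeries_mem_Icc (hb : 1 < b) (hd : ∀ i, d i + M ≤ M * b) (n : ℕ) :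
    digitSeries b d ∈
      Set.Icc ((digitPrefix b d n : ℝ) / b ^ n) ((digitPrefix b d n + M) / b ^ n) := by
  rw [digitSeries_eq_prefix_add_tail hb hd n]
  constructor <;> gcongr
  · exact le_add_of_nonneg_right digitSeries_nonneg
  · exact digitSeries_le hb fun i ↦ hd (n + i)

theorem inv_pow_le_digitSeries_sub {a a' : ℕ → ℕ} {i : ℕ} (ha : ∀ j, a j < b)
    (ha' : ∀ j, a' j < b) (heq : ∀ j < i, a j = a' j) (hi : a i + 2 ≤ a' i) :
    ((b : ℝ) ^ (i + 1))⁻¹ ≤ digitSeries b a' - digitSeries b a := by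
  have hb : 1 < b := by have := ha' i; lia
  have hupper := (digitSeries_mem_Icc (M := 1) hb (by simpa using ha) (i + 1)).2
  have hlower := (digitSeries_mem_Icc (M := 1) hb (by simpa using ha') (i + 1)).1
  have hprefix : (digitPrefix b a (i + 1) : ℝ) + 2 ≤ digitPrefix b a' (i + 1) := by
    rw [digitPrefix, digitPrefix, digitPrefix_congr heq]
    exact_mod_cast (by lia)
  calc ((b : ℝ) ^ (i + 1))⁻¹
      ≤ (digitPrefix b a' (i + 1) - (digitPrefix b a (i + 1) + 1)) / b ^ (i + 1) := by
        rw [inv_eq_one_div]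
        gcongr
        linarith
    _ ≤ digitSeries b a' - digitSeries b a := by
        rw [sub_div]
        exact sub_le_sub hlower (by exact_mod_cast hupper)

theorem inv_pow_le_abs_digitSeries_sub {D : Finset ℕ} (hD : ∀ x ∈ D, x < b)
    (hgap : ∀ x ∈ D, x + 1 ∉ D) {a a' : ℕ → ℕ} {i : ℕ} (ha : ∀ j, a j ∈ D) (ha' : ∀ j, a' j ∈ D)
    (heq : ∀ j < i, a j = a' j) (hi : a i ≠ a' i) :
    ((b : ℝ) ^ (i + 1))⁻¹ ≤ |digitSeries b a - digitSeries b a'| := by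
  wlog hlt : a i < a' i generalizing a a'
  · rw [abs_sub_comm]
    exact this ha' ha (fun j hj ↦ (heq j hj).symm) hi.symm (by lia)
  have hne : a' i ≠ a i + 1 := fun h ↦ hgap _ (ha i) (h ▸ ha' i)
  rw [abs_sub_comm]
  exact (inv_pow_le_digitSeries_sub (fun j ↦ hD _ (ha j)) (fun j ↦ hD _ (ha' j)) heq
    (by lia)).trans (le_abs_self _)

end DigitSeries

section DigitNumbers

/-- The integers with `n` base-`b` digits, all taken from `D`. -/
def digitNumbers (b : ℕ) (D : Finset ℕ) : ℕ → Finset ℕ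
  | 0 => {0}
  | n + 1 => (digitNumbers b D n ×ˢ D).image fun p ↦ b * p.1 + p.2

variable {b : ℕ} {D : Finset ℕ}

theorem card_le_of_forall_lt (hD : ∀ x ∈ D, x < b) : #D ≤ b :=
  (card_le_card fun x hx ↦ mem_range.2 (hD x hx)).trans_eq (card_range b)

theorem card_digitNumbers (hD : ∀ x ∈ D, x < b) (n : ℕ) : #(digitNumbers b D n) = #D ^ n := by
  induction n with
  | zero => rfl
  | succ n ih =>
    rw [digitNumbers, card_image_of_injOn, card_product, ih, pow_succ]
    rintro ⟨p, x⟩ hpx ⟨q, y⟩ hqy (h : b * p + x = b * q + y)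
    have hx := hD x (mem_product.1 hpx).2
    have hy := hD y (mem_product.1 hqy).2
    have hmod := congrArg (· % b) h
    have hdiv := congrArg (· / b) h
    simp only [Nat.mul_add_mod, Nat.mod_eq_of_lt, hx, hy] at hmod
    simp only [Nat.mul_add_div (by lia : 0 < b), Nat.div_eq_of_lt, hx, hy, add_zero] at hdiv
    rw [hmod, hdiv]

theorem exists_digitPrefix_eq_of_mem_digitNumbers (hD : D.Nonempty) {n a : ℕ}
    (ha : a ∈ digitNumbers b D n) :
    ∃ c : ℕ → ℕ, (∀ i, c i ∈ D) ∧ digitPrefix b c n = a := by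
  induction n generalizing a with
  | zero =>
    obtain ⟨x, hx⟩ := hD
    exact ⟨fun _ ↦ x, fun _ ↦ hx, (mem_singleton.1 ha).symm⟩
  | succ n ih =>
    obtain ⟨⟨p, x⟩, hpx, rfl⟩ := mem_image.1 ha
    obtain ⟨c, hc, rfl⟩ := ih (mem_product.1 hpx).1
    refine ⟨Function.update c n x, fun i ↦ ?_, ?_⟩
    · rcases eq_or_ne i n with rfl | hi
      · simpa using (mem_product.1 hpx).2
      · simpa [hi] using hc i
    · rw [digitPrefix, Function.update_self,
        digitPrefix_congr fun i hi ↦ Function.update_of_ne hi.ne x c]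

theorem exists_card_le_forall_exists_digitPrefix_add_mem (hD : ∀ x ∈ D, x < b) (hne : D.Nonempty)
    (n : ℕ) :
    ∃ B : Finset ℕ, (#B : ℝ) ≤ (2 * n * Real.log b + 1) * (b / #D) ^ n ∧
      ∀ d : ℕ → ℕ, (∀ i, d i < b) → ∃ c : ℕ → ℕ, (∀ i, c i ∈ D) ∧ digitPrefix b (d + c) n ∈ B := by
  have hlt : ∀ d : ℕ → ℕ, (∀ i, d i < b) → digitPrefix b d n < b ^ n := fun d hd ↦ by
    simpa using digitPrefix_add_le (M := 1) (b := b) (by simpa using hd) n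
  have hAne : (digitNumbers b D n).Nonempty := by
    rw [← card_pos, card_digitNumbers hD]
    exact pow_pos hne.card_pos n
  have hAlt : ∀ a ∈ digitNumbers b D n, a < b ^ n := fun a ha ↦ by
    obtain ⟨c, hc, rfl⟩ := exists_digitPrefix_eq_of_mem_digitNumbers hne ha
    exact hlt c fun i ↦ hD _ (hc i)
  obtain ⟨B, hBcard, hB⟩ := exists_card_le_forall_exists_add_mem hAne hAlt
  have hD0 : (0 : ℝ) < #D := by exact_mod_cast hne.card_pos
  have hDb : (#D : ℝ) ≤ b := by exact_mod_cast card_le_of_forall_lt hD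
  refine ⟨B, hBcard.trans ?_, fun d hd ↦ ?_⟩
  · calc 2 * ((b ^ n : ℕ) : ℝ) * Real.log ((b ^ n : ℕ) : ℝ) / #(digitNumbers b D n) + 1
        = 2 * n * Real.log b * (b / #D) ^ n + 1 := by
          rw [card_digitNumbers hD, div_pow]
          push_cast
          rw [Real.log_pow]
          ring
      _ ≤ 2 * n * Real.log b * (b / #D) ^ n + (b / #D) ^ n := by
          gcongr
          exact one_le_pow₀ ((one_le_div hD0).2 hDb)
      _ = (2 * n * Real.log b + 1) * (b / #D) ^ n := by ring
  · obtain ⟨a, ha, hmem⟩ := hB _ (hlt d hd)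
    obtain ⟨c, hc, rfl⟩ := exists_digitPrefix_eq_of_mem_digitNumbers hne ha
    exact ⟨c, hc, by rwa [digitPrefix_add]⟩

end DigitNumbers

section FreeDigits

/-- The reals in `[0, 1]` with a base-`b` expansion all of whose digits belong to `D`. -/
def digitSet (b : ℕ) (D : Finset ℕ) : Set ℝ :=
  digitSeries b '' {a | ∀ i, a i ∈ D}

/-- The points of `digitSet b D` whose digits at the positions outside `J` are those of `c`, the
digits at the positions in `J` being free. -/
def freeDigitSet (b : ℕ) (D : Finset ℕ) (J : ℕ → Prop) (c : ℕ → ℕ) : Set ℝ :=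
  digitSeries b '' {a | (∀ i, a i ∈ D) ∧ ∀ i, ¬ J i → a i = c i}

/-- The sequence whose values at the positions in `J` are `v 0, v 1, …`, in this order, and which
agrees with `c` elsewhere. -/
def insertAt (J : ℕ → Prop) [DecidablePred J] (c v : ℕ → ℕ) (i : ℕ) : ℕ :=
  if J i then v (Nat.count J i) else c i

/-- The point of `freeDigitSet b D J c` whose free digits are `w 0, w 1, …`, where `Fin #D`
enumerates the digits in `D`. -/
noncomputable def freeDigitPoint (b : ℕ) (D : Finset ℕ) (J : ℕ → Prop) [DecidablePred J]
    (c : ℕ → ℕ) (w : ℕ → Fin #D) : ℝ :=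
  digitSeries b (insertAt J c fun k ↦ D.equivFin.symm (w k))

variable {b : ℕ} {D : Finset ℕ} {J : ℕ → Prop} [DecidablePred J] {c : ℕ → ℕ}

theorem insertAt_mem {v : ℕ → ℕ} (hc : ∀ i, c i ∈ D) (hv : ∀ i, v i ∈ D) (i : ℕ) :
    insertAt J c v i ∈ D := by
  rw [insertAt]
  split_ifs
  exacts [hv _, hc i]

theorem insertAt_congr_of_lt_nth {v v' : ℕ → ℕ} {i j : ℕ} (hJ : {i | J i}.Infinite)
    (hv : ∀ k < j, v k = v' k) (hi : i < Nat.nth J j) : insertAt J c v i = insertAt J c v' i := by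
  simp only [insertAt]
  split_ifs with h
  · refine hv _ ?_
    simpa only [Nat.count_nth_of_infinite hJ] using Nat.count_strict_mono h hi
  · rfl

theorem insertAt_nth (hJ : {i | J i}.Infinite) (v : ℕ → ℕ) (j : ℕ) :
    insertAt J c v (Nat.nth J j) = v j := by
  rw [insertAt, if_pos (Nat.nth_mem_of_infinite hJ j), Nat.count_nth_of_infinite hJ]

theorem freeDigitPoint_mem_freeDigitSet (hc : ∀ i, c i ∈ D) (w : ℕ → Fin #D) :
    freeDigitPoint b D J c w ∈ freeDigitSet b D J c :=
  ⟨_, ⟨insertAt_mem hc fun k ↦ (D.equivFin.symm (w k)).2, fun _ hi ↦ if_neg hi⟩, rfl⟩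

theorem exists_abs_ofDigits_sub_le_and_le_abs_freeDigitPoint_sub (hD : ∀ x ∈ D, x < b)
    (hgap : ∀ x ∈ D, x + 1 ∉ D) (hJ : {i | J i}.Infinite) (hc : ∀ i, c i ∈ D)
    {w w' : ℕ → Fin #D} (hw : w ≠ w') :
    ∃ i, |Real.ofDigits w - Real.ofDigits w'| ≤ ((#D : ℝ) ^ Nat.count J i)⁻¹ ∧
      ((b : ℝ) ^ (i + 1))⁻¹ ≤ |freeDigitPoint b D J c w - freeDigitPoint b D J c w'| := by
  classical
  have hne : ∃ j, w j ≠ w' j := Function.ne_iff.1 hw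
  set j := Nat.find hne
  have heq : ∀ k < j, w k = w' k := fun k hk ↦ not_not.1 (Nat.find_min hne hk)
  refine ⟨Nat.nth J j, ?_, ?_⟩
  · rw [Nat.count_nth_of_infinite hJ]
    exact Real.abs_ofDigits_sub_ofDigits_le heq
  · refine inv_pow_le_abs_digitSeries_sub hD hgap
      (insertAt_mem hc fun k ↦ (D.equivFin.symm (w k)).2)
      (insertAt_mem hc fun k ↦ (D.equivFin.symm (w' k)).2)
      (fun i hi ↦ insertAt_congr_of_lt_nth hJ (fun k hk ↦ by rw [heq k hk]) hi) ?_
    rw [insertAt_nth hJ, insertAt_nth hJ]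
    exact fun h ↦ Nat.find_spec hne (D.equivFin.symm.injective (Subtype.ext h))

theorem exists_inv_pow_le_mul_inv_pow_rpow {q : ℕ} (hq : 0 < q) (hb : 1 < b) {θ : ℝ} (hθ : 0 ≤ θ)
    {n : ℕ → ℕ} (hn : ∀ᶠ i in atTop, θ * i ≤ n i) :
    ∃ C : ℝ≥0, ∀ i, ((q : ℝ) ^ n i)⁻¹ ≤
      C * (((b : ℝ) ^ (i + 1))⁻¹) ^ (θ * (Real.log q / Real.log b)) := by
  obtain ⟨N, hN⟩ := eventually_atTop.1 hn
  have hb0 : (0 : ℝ) < b := by positivity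
  have hq0 : (0 : ℝ) < q := by positivity
  have hlogb : Real.log b ≠ 0 := (Real.log_pos (by exact_mod_cast hb)).ne'
  set s := θ * (Real.log q / Real.log b) with hs
  have hbase : (q : ℝ) ^ θ = (b : ℝ) ^ s := by
    rw [Real.rpow_def_of_pos hq0, Real.rpow_def_of_pos hb0, hs]
    field_simp
  have hlin : ∀ i, θ * (i - N) ≤ n i := fun i ↦ by
    rcases le_total N i with hi | hi
    · nlinarith [hN i hi, mul_nonneg hθ N.cast_nonneg]
    · exact (mul_nonpos_of_nonneg_of_nonpos hθ (sub_nonpos.2 (by exact_mod_cast hi))).trans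
        (n i).cast_nonneg
  refine ⟨⟨(b : ℝ) ^ (s * (N + 1)), by positivity⟩, fun i ↦ ?_⟩
  calc ((q : ℝ) ^ n i)⁻¹ ≤ ((q : ℝ) ^ (θ * (i - N)))⁻¹ := by
        rw [← Real.rpow_natCast]
        gcongr
        · exact_mod_cast hq
        · exact hlin i
    _ = (b : ℝ) ^ (s * (N + 1)) * (((b : ℝ) ^ (i + 1))⁻¹) ^ s := by
        rw [Real.rpow_mul hq0.le, hbase, ← Real.rpow_mul hb0.le, ← Real.rpow_neg hb0.le,
          ← Real.rpow_natCast, ← Real.rpow_neg hb0.le, ← Real.rpow_mul hb0.le,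
          ← Real.rpow_add hb0]
        congr 1
        push_cast
        ring

theorem infinite_of_eventually_mul_le_count {θ : ℝ} (hθ : 0 < θ)
    (hJ : ∀ᶠ i : ℕ in atTop, θ * i ≤ Nat.count J i) : {i | J i}.Infinite := by
  intro hfin
  have hlinear : Tendsto (fun i : ℕ ↦ θ * i) atTop atTop :=
    tendsto_natCast_atTop_atTop.const_mul_atTop hθ
  obtain ⟨i, hi, hlarge⟩ :=
    (hJ.and (hlinear.eventually_gt_atTop (#hfin.toFinset : ℝ))).exists
  exact absurd (Nat.count_le_card hfin i) (by exact_mod_cast not_le.2 (hlarge.trans_le hi))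

theorem exists_edist_ofDigits_le_mul_edist_freeDigitPoint_rpow (hD : ∀ x ∈ D, x < b)
    (hgap : ∀ x ∈ D, x + 1 ∉ D) (hb : 1 < b) (hc : ∀ i, c i ∈ D) {θ : ℝ} (hθ : 0 < θ)
    (hJ : ∀ᶠ i : ℕ in atTop, θ * i ≤ Nat.count J i) :
    ∃ C : ℝ≥0, ∀ w w', edist (Real.ofDigits w) (Real.ofDigits w') ≤
      C * edist (freeDigitPoint b D J c w) (freeDigitPoint b D J c w') ^
        (θ * (Real.log #D / Real.log b)) := by
  obtain ⟨C, hC⟩ := exists_inv_pow_le_mul_inv_pow_rpow (card_pos.2 ⟨c 0, hc 0⟩) hb hθ.le hJ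
  refine ⟨C, fun w w' ↦ ?_⟩
  rcases eq_or_ne w w' with rfl | hw
  · simp
  obtain ⟨i, hupper, hlower⟩ := exists_abs_ofDigits_sub_le_and_le_abs_freeDigitPoint_sub hD hgap
    (infinite_of_eventually_mul_le_count hθ hJ) hc hw
  have hexp : 0 ≤ θ * (Real.log #D / Real.log b) := by positivity
  rw [edist_dist, edist_dist, ENNReal.ofReal_rpow_of_nonneg dist_nonneg hexp,
    ← ENNReal.ofReal_coe_nnreal, ← ENNReal.ofReal_mul C.coe_nonneg]
  refine ENNReal.ofReal_le_ofReal (hupper.trans ((hC i).trans ?_))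
  gcongr
  exact hlower

theorem one_le_dimH_range_ofDigits (hb : 1 < b) :
    1 ≤ dimH (Set.range (Real.ofDigits (b := b))) :=
  calc 1 = dimH (Set.Icc (0 : ℝ) 1) := by
        rw [Real.dimH_of_nonempty_interior (by simp), Module.finrank_self, Nat.cast_one]
    _ ≤ dimH (Set.range (Real.ofDigits (b := b))) := dimH_mono fun x hx ↦ by
        obtain ⟨w, -, hw⟩ := Real.ofDigits_SurjOn hb hx
        exact ⟨w, hw⟩

theorem ofReal_mul_log_div_log_le_dimH_freeDigitSet (hD : ∀ x ∈ D, x < b)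
    (hgap : ∀ x ∈ D, x + 1 ∉ D) (hcard : 1 < #D) (hc : ∀ i, c i ∈ D) {θ : ℝ}
    (hJ : ∀ᶠ i : ℕ in atTop, θ * i ≤ Nat.count J i) :
    ENNReal.ofReal (θ * (Real.log #D / Real.log b)) ≤ dimH (freeDigitSet b D J c) := by
  have hb : 1 < b := hcard.trans_le (card_le_of_forall_lt hD)
  have hlogD : 0 < Real.log #D := Real.log_pos (by exact_mod_cast hcard)
  have hlogb : 0 < Real.log b := Real.log_pos (by exact_mod_cast hb)
  rcases le_or_gt θ 0 with hθ | hθ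
  · simp [ENNReal.ofReal_of_nonpos (mul_nonpos_of_nonpos_of_nonneg hθ (div_pos hlogD hlogb).le)]
  obtain ⟨C, hholder⟩ :=
    exists_edist_ofDigits_le_mul_edist_freeDigitPoint_rpow hD hgap hb hc hθ hJ
  lift θ * (Real.log #D / Real.log b) to ℝ≥0 using by positivity with s hs
  have hspos : 0 < s := by rw [← NNReal.coe_pos, hs]; positivity
  calc ENNReal.ofReal s = s * 1 := by simp
    _ ≤ s * dimH (Set.range (Real.ofDigits (b := #D))) := by
        gcongr
        exact one_le_dimH_range_ofDigits hcard
    _ ≤ dimH (Set.range (freeDigitPoint b D J c)) := mul_dimH_range_le_of_edist_le hspos hholder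
    _ ≤ dimH (freeDigitSet b D J c) :=
        dimH_mono (Set.range_subset_iff.2 (freeDigitPoint_mem_freeDigitSet hc))

end FreeDigits

section GridLimit

/-- The points that, for every `K`, lie within `M` grid steps to the right of a point of `P K` in
the grid of mesh `b ^ (-n K)`. -/
def gridLimit (b M : ℕ) (n : ℕ → ℕ) (P : ℕ → Finset ℕ) : Set ℝ :=
  ⋂ K, ⋃ p ∈ P K, Set.Icc ((p : ℝ) / b ^ n K) ((p + M) / b ^ n K)

variable {b M : ℕ} {n : ℕ → ℕ} {P : ℕ → Finset ℕ}

theorem isClosed_gridLimit : IsClosed (gridLimit b M n P) :=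
  isClosed_iInter fun K ↦ (P K).finite_toSet.isClosed_biUnion fun _ _ ↦ isClosed_Icc

theorem digitSeries_mem_gridLimit {d : ℕ → ℕ} (hb : 1 < b) (hd : ∀ i, d i + M ≤ M * b)
    (hP : ∀ K, digitPrefix b d (n K) ∈ P K) : digitSeries b d ∈ gridLimit b M n P :=
  Set.mem_iInter.2 fun K ↦ Set.mem_biUnion (hP K) (digitSeries_mem_Icc hb hd (n K))

theorem dimH_gridLimit_le (hb : 1 < b) (hn : Tendsto n atTop atTop) {s : ℝ≥0}
    (hP : ∀ᶠ K in atTop, (#(P K) : ℝ) ≤ ((b : ℝ) ^ n K) ^ (s : ℝ)) :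
    dimH (gridLimit b M n P) ≤ s := by
  have hmesh : Tendsto (fun K ↦ (M : ℝ) / b ^ n K) atTop (𝓝 0) :=
    ((tendsto_pow_atTop_atTop_of_one_lt (by exact_mod_cast hb)).comp hn).const_div_atTop (M : ℝ)
  refine dimH_le_of_eventually_card_mul_rpow_le (ι := fun K ↦ P K)
    (t := fun K p ↦ Set.Icc ((p : ℝ) / b ^ n K) ((p + M) / b ^ n K))
    (δ := fun K ↦ ENNReal.ofReal (M / b ^ n K)) (C := (M : ℝ≥0) ^ (s : ℝ))
    (by simpa using ENNReal.tendsto_ofReal hmesh) (fun K p ↦ ?_) (fun K x hx ↦ ?_) ?_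
  · rw [Real.ediam_Icc, add_div, add_sub_cancel_left]
  · simpa [gridLimit] using Set.mem_iInter.1 hx K
  · filter_upwards [hP] with K hK
    rw [Fintype.card_coe, ENNReal.ofReal_rpow_of_nonneg (by positivity) s.coe_nonneg,
      ← ENNReal.ofReal_natCast, ← ENNReal.ofReal_mul (by positivity),
      ← ENNReal.ofReal_coe_nnreal, NNReal.coe_rpow, NNReal.coe_natCast]
    refine ENNReal.ofReal_le_ofReal ?_
    rw [Real.div_rpow (by positivity) (by positivity), mul_div_assoc',
      div_le_iff₀ (by positivity), mul_comm]
    gcongr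

theorem eventually_mul_add_one_le_pow {x : ℝ} (hx : 1 < x) (c : ℝ) :
    ∀ᶠ K : ℕ in atTop, c * (K + 1) ≤ x ^ K := by
  have hlim := ((tendsto_pow_const_div_const_pow_of_one_lt 1 hx).add
    (tendsto_pow_const_div_const_pow_of_one_lt 0 hx)).const_mul c
  rw [add_zero, mul_zero] at hlim
  filter_upwards [hlim.eventually_lt_const one_pos] with K hK
  rw [← add_div, mul_div_assoc', div_lt_one (by positivity), pow_one, pow_zero] at hK
  exact hK.le

theorem le_mul_pow_mul_rpow_of_succ_le {N : ℕ → ℝ} {x c α : ℝ} (hx : 0 < x) (hc : 0 ≤ c)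
    (hzero : N 0 ≤ 1) (hsucc : ∀ K : ℕ, N (K + 1) ≤ N K * (c * (K + 1) * (x ^ (2 * K + 1)) ^ α))
    (K : ℕ) : N K ≤ (c * (K + 1)) ^ K * (x ^ K ^ 2) ^ α := by
  induction K with
  | zero => simpa using hzero
  | succ K ih =>
    calc N (K + 1) ≤ N K * (c * (K + 1) * (x ^ (2 * K + 1)) ^ α) := hsucc K
      _ ≤ (c * (K + 1)) ^ K * (x ^ K ^ 2) ^ α * (c * (K + 1) * (x ^ (2 * K + 1)) ^ α) := by gcongr
      _ = (c * (K + 1)) ^ (K + 1) * (x ^ (K + 1) ^ 2) ^ α := by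
          rw [show (K + 1) ^ 2 = K ^ 2 + (2 * K + 1) by ring, pow_add x (K ^ 2),
            Real.mul_rpow (by positivity) (by positivity), pow_succ (c * _), mul_mul_mul_comm]
      _ ≤ (c * ((K + 1 : ℕ) + 1)) ^ (K + 1) * (x ^ (K + 1) ^ 2) ^ α := by
          gcongr
          lia

theorem eventually_le_rpow_of_succ_le {N : ℕ → ℝ} {x c α s : ℝ} (hx : 1 < x) (hc : 0 ≤ c)
    (hzero : N 0 ≤ 1) (hsucc : ∀ K : ℕ, N (K + 1) ≤ N K * (c * (K + 1) * (x ^ (2 * K + 1)) ^ α))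
    (hs : α < s) : ∀ᶠ K in atTop, N K ≤ (x ^ K ^ 2) ^ s := by
  have hx0 : 0 < x := zero_lt_one.trans hx
  filter_upwards [eventually_mul_add_one_le_pow (Real.one_lt_rpow hx (sub_pos.2 hs)) c] with K hK
  calc N K ≤ (c * (K + 1)) ^ K * (x ^ K ^ 2) ^ α :=
        le_mul_pow_mul_rpow_of_succ_le hx0 hc hzero hsucc K
    _ ≤ ((x ^ (s - α)) ^ K) ^ K * (x ^ K ^ 2) ^ α := by gcongr
    _ = (x ^ K ^ 2) ^ (s - α) * (x ^ K ^ 2) ^ α := by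
        rw [← pow_mul, ← sq, Real.rpow_pow_comm hx0.le]
    _ = (x ^ K ^ 2) ^ s := by rw [← Real.rpow_add (by positivity), sub_add_cancel]

theorem dimH_gridLimit_sq_le {c α : ℝ} (hb : 1 < b) (hc : 0 ≤ c) (hzero : #(P 0) ≤ 1)
    (hsucc : ∀ K : ℕ, (#(P (K + 1)) : ℝ) ≤
      #(P K) * (c * (K + 1) * ((b : ℝ) ^ (2 * K + 1)) ^ α)) :
    dimH (gridLimit b M (· ^ 2) P) ≤ ENNReal.ofReal α := by
  refine le_of_forall_gt_imp_ge_of_dense fun s hs ↦ ?_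
  induction s with
  | top => exact le_top
  | coe s =>
    refine dimH_gridLimit_le hb (tendsto_pow_atTop two_ne_zero) ?_
    refine eventually_le_rpow_of_succ_le (N := fun K ↦ #(P K)) (by exact_mod_cast hb) hc
      (by exact_mod_cast hzero) hsucc ?_
    rw [← ENNReal.ofReal_coe_nnreal] at hs
    exact lt_of_not_ge fun h ↦ hs.not_ge (ENNReal.ofReal_le_ofReal h)

end GridLimit

section Blocks

/-- Cut `ℕ` into the blocks `[K ^ 2, (K + 1) ^ 2)`. A position is free when it is among the first
`f K` positions of its block. -/
def IsFree (f : ℕ → ℕ) (i : ℕ) : Prop :=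
  i - Nat.sqrt i ^ 2 < f (Nat.sqrt i)

instance (f : ℕ → ℕ) : DecidablePred (IsFree f) :=
  fun _ ↦ inferInstanceAs (Decidable (_ < _))

/-- The sequence whose values at the non-free positions of the `K`-th block are
`c K 0, c K 1, …`. Its values at free positions are irrelevant. -/
def blockConcat (f : ℕ → ℕ) (c : ℕ → ℕ → ℕ) (i : ℕ) : ℕ :=
  c (Nat.sqrt i) (i - Nat.sqrt i ^ 2 - f (Nat.sqrt i))

/-- The base-`b` integers of length `K ^ 2`, with digits up to `2 * (b - 1)`, whose non-free part
of the `k`-th block is a number in `B k`, for every `k < K`. -/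
def blockPrefixes (b : ℕ) (f : ℕ → ℕ) (B : ℕ → Finset ℕ) : ℕ → Finset ℕ
  | 0 => {0}
  | K + 1 => (blockPrefixes b f B K ×ˢ range (2 * b ^ f K) ×ˢ B K).image fun p ↦
      b ^ (2 * K + 1 - f K) * (b ^ f K * p.1 + p.2.1) + p.2.2

variable {b : ℕ} {f : ℕ → ℕ} {B : ℕ → Finset ℕ}

theorem isFree_sq_add_iff {K j : ℕ} (hj : j ≤ 2 * K) : IsFree f (K ^ 2 + j) ↔ j < f K := by
  rw [IsFree, Nat.sqrt_add_eq' K (by lia), Nat.add_sub_cancel_left]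

theorem blockConcat_sq_add {c : ℕ → ℕ → ℕ} {K j : ℕ} (hj : f K + j ≤ 2 * K) :
    blockConcat f c (K ^ 2 + (f K + j)) = c K j := by
  rw [blockConcat, Nat.sqrt_add_eq' K (by lia), Nat.add_sub_cancel_left, Nat.add_sub_cancel_left]

theorem count_isFree_sq_add_le (hf : ∀ K, f K ≤ 2 * K + 1) (K : ℕ) :
    Nat.count (IsFree f) (K ^ 2) + f K ≤ Nat.count (IsFree f) ((K + 1) ^ 2) := by
  have hblock : Nat.count (fun j ↦ IsFree f (K ^ 2 + j)) (f K) = f K :=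
    Nat.count_iff_forall.2 fun j hj ↦ (isFree_sq_add_iff (by have := hf K; lia)).2 hj
  calc Nat.count (IsFree f) (K ^ 2) + f K = Nat.count (IsFree f) (K ^ 2 + f K) := by
        rw [Nat.count_add, hblock]
    _ ≤ Nat.count (IsFree f) ((K + 1) ^ 2) := Nat.count_monotone _ (by nlinarith [hf K])

theorem mul_sq_sub_le_count_isFree {θ : ℝ} (hf : ∀ K, f K ≤ 2 * K + 1)
    (hθ : ∀ K : ℕ, θ * (2 * K + 1) - 1 ≤ f K) (K : ℕ) :
    θ * (K : ℝ) ^ 2 - K ≤ Nat.count (IsFree f) (K ^ 2) := by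
  induction K with
  | zero => simp
  | succ K ih =>
    have hstep : (Nat.count (IsFree f) (K ^ 2) : ℝ) + f K ≤ Nat.count (IsFree f) ((K + 1) ^ 2) := by
      exact_mod_cast count_isFree_sq_add_le hf K
    push_cast
    linarith [hθ K]

theorem eventually_mul_le_count_isFree {θ θ' : ℝ} (hf : ∀ K, f K ≤ 2 * K + 1)
    (hθ : ∀ K : ℕ, θ * (2 * K + 1) - 1 ≤ f K) (hθ' : θ' < θ) :
    ∀ᶠ i : ℕ in atTop, θ' * i ≤ Nat.count (IsFree f) i := by
  obtain ⟨K₀, hK₀⟩ := exists_nat_gt ((2 * |θ'| + 1) / (θ - θ'))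
  rw [div_lt_iff₀ (sub_pos.2 hθ')] at hK₀
  filter_upwards [eventually_ge_atTop (K₀ ^ 2)] with i hi
  obtain ⟨j, hj⟩ := Nat.exists_eq_add_of_le (Nat.sqrt_le' i)
  set K := Nat.sqrt i
  have hjK : (j : ℝ) ≤ 2 * K := by
    have : i < (K + 1) ^ 2 := Nat.lt_succ_sqrt' i
    exact_mod_cast (by lia : j ≤ 2 * K)
  have hlarge : 2 * |θ'| + 1 ≤ K * (θ - θ') := by
    have : (K₀ : ℝ) ≤ K := by exact_mod_cast Nat.le_sqrt'.2 hi
    nlinarith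
  calc θ' * (i : ℝ) = θ' * K ^ 2 + θ' * j := by rw [hj]; push_cast; ring
    _ ≤ θ' * K ^ 2 + |θ'| * (2 * K) := by gcongr; exact le_abs_self θ'
    _ ≤ θ * K ^ 2 - K := by nlinarith [K.cast_nonneg (α := ℝ)]
    _ ≤ Nat.count (IsFree f) (K ^ 2) := mul_sq_sub_le_count_isFree hf hθ K
    _ ≤ Nat.count (IsFree f) i := by exact_mod_cast Nat.count_monotone _ (Nat.sqrt_le' i)

theorem card_blockPrefixes_succ_le (K : ℕ) :
    #(blockPrefixes b f B (K + 1)) ≤ #(blockPrefixes b f B K) * (2 * b ^ f K * #(B K)) :=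
  card_image_le.trans_eq (by simp only [card_product, card_range])

theorem digitPrefix_mem_blockPrefixes {d : ℕ → ℕ} (hf : ∀ K, f K ≤ 2 * K + 1)
    (hd : ∀ i, d i + 2 ≤ 2 * b)
    (hB : ∀ K, digitPrefix b (fun j ↦ d (K ^ 2 + (f K + j))) (2 * K + 1 - f K) ∈ B K) (K : ℕ) :
    digitPrefix b d (K ^ 2) ∈ blockPrefixes b f B K := by
  induction K with
  | zero => exact mem_singleton_self 0
  | succ K ih =>
    have hlen : (K + 1) ^ 2 = K ^ 2 + f K + (2 * K + 1 - f K) := by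
      have := hf K
      rw [add_assoc, Nat.add_sub_cancel' this]
      ring
    have hfree : digitPrefix b (fun j ↦ d (K ^ 2 + j)) (f K) + 2 ≤ 2 * b ^ f K :=
      digitPrefix_add_le (fun j ↦ hd (K ^ 2 + j)) (f K)
    rw [hlen, digitPrefix_add_index, digitPrefix_add_index]
    exact mem_image.2 ⟨(_, digitPrefix b (fun j ↦ d (K ^ 2 + j)) (f K), _),
      mem_product.2 ⟨ih, mem_product.2 ⟨mem_range.2 (by lia), hB K⟩⟩, by simp only [add_assoc]⟩

theorem image_add_freeDigitSet_subset_gridLimit {D : Finset ℕ} {d : ℕ → ℕ} {c : ℕ → ℕ → ℕ}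
    (hb : 1 < b) (hD : ∀ x ∈ D, x < b) (hd : ∀ i, d i < b) (hf : ∀ K, f K ≤ 2 * K + 1)
    (hB : ∀ K, digitPrefix b ((fun j ↦ d (K ^ 2 + (f K + j))) + c K) (2 * K + 1 - f K) ∈ B K) :
    (· + digitSeries b d) '' freeDigitSet b D (IsFree f) (blockConcat f c) ⊆
      gridLimit b 2 (· ^ 2) (blockPrefixes b f B) := by
  rintro _ ⟨_, ⟨a, ⟨haD, hac⟩, rfl⟩, rfl⟩
  have hab : ∀ i, a i < b := fun i ↦ hD _ (haD i)
  simp only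
  rw [add_comm, ← digitSeries_add (M := 1) hb (by simpa using hd) (by simpa using hab)]
  have hsum : ∀ i, (d + a) i + 2 ≤ 2 * b := fun i ↦ by
    have := hd i
    have := hab i
    simp only [Pi.add_apply]
    lia
  refine digitSeries_mem_gridLimit hb hsum
    (digitPrefix_mem_blockPrefixes hf hsum fun K ↦ ?_)
  convert! hB K using 1
  refine digitPrefix_congr fun j hj ↦ ?_
  have hj' : f K + j ≤ 2 * K := by lia
  simp only [Pi.add_apply]
  rw [hac _ (by rw [isFree_sq_add_iff hj']; lia), blockConcat_sq_add hj']

end Blocks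

section MeetingTranslates

variable {b : ℕ} {D : Finset ℕ}

theorem pow_mul_div_pow_le_rpow {q f g : ℕ} (hq : 0 < q) (hb : 1 < b) {θ : ℝ}
    (hf : f ≤ θ * (f + g : ℕ)) :
    (b : ℝ) ^ f * (b / q) ^ g ≤
      ((b : ℝ) ^ (f + g)) ^ (1 - (1 - θ) * (Real.log q / Real.log b)) := by
  have hlogb : 0 < Real.log b := Real.log_pos (by exact_mod_cast hb)
  have hb0 : (b : ℝ) ≠ 0 := by positivity
  have hq0 : (q : ℝ) ≠ 0 := by positivity
  rw [← Real.log_le_log_iff (by positivity) (by positivity),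
    Real.log_mul (by positivity) (by positivity), Real.log_rpow (by positivity), Real.log_pow,
    Real.log_pow, Real.log_pow, Real.log_div hb0 hq0]
  have hexpand : (1 - (1 - θ) * (Real.log q / Real.log b)) * ((f + g : ℕ) * Real.log b) =
      (f + g : ℕ) * Real.log b - (f + g : ℕ) * Real.log q + θ * (f + g : ℕ) * Real.log q := by
    field_simp
    ring
  have := mul_le_mul_of_nonneg_right hf (Real.log_natCast_nonneg q)
  rw [hexpand]
  push_cast at this ⊢
  linarith

theorem two_mul_pow_mul_le_rpow {q f g K : ℕ} (hq : 0 < q) (hb : 1 < b) (hfg : f + g = 2 * K + 1)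
    {θ : ℝ} (hf : f ≤ θ * (2 * K + 1)) :
    2 * (b : ℝ) ^ f * ((2 * g * Real.log b + 1) * (b / q) ^ g) ≤
      8 * b * (K + 1) *
        ((b : ℝ) ^ (2 * K + 1)) ^ (1 - (1 - θ) * (Real.log q / Real.log b)) := by
  have hlog : Real.log b ≤ b := Real.log_le_self b.cast_nonneg
  have hb1 : (1 : ℝ) ≤ b := by exact_mod_cast hb.le
  have hg : (g : ℝ) ≤ 2 * K + 1 := by exact_mod_cast (by lia : g ≤ 2 * K + 1)
  calc 2 * (b : ℝ) ^ f * ((2 * g * Real.log b + 1) * (b / q) ^ g)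
      = 2 * (2 * g * Real.log b + 1) * (b ^ f * (b / q) ^ g) := by ring
    _ ≤ 2 * (2 * (2 * K + 1) * b + 2 * b) * (b ^ f * (b / q) ^ g) := by
        gcongr
        linarith
    _ = 8 * b * (K + 1) * (b ^ f * (b / q) ^ g) := by ring
    _ ≤ _ := by
        rw [← hfg]
        gcongr
        exact pow_mul_div_pow_le_rpow hq hb (by rw [hfg]; exact_mod_cast hf)

theorem dimH_gridLimit_blockPrefixes_le {f : ℕ → ℕ} {B : ℕ → Finset ℕ} {q : ℕ} (hq : 0 < q)
    (hb : 1 < b) {θ : ℝ} (hf : ∀ K, f K ≤ 2 * K + 1) (hfθ : ∀ K : ℕ, f K ≤ θ * (2 * K + 1))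
    (hB : ∀ K, (#(B K) : ℝ) ≤
      (2 * (2 * K + 1 - f K : ℕ) * Real.log b + 1) * (b / q) ^ (2 * K + 1 - f K)) :
    dimH (gridLimit b 2 (· ^ 2) (blockPrefixes b f B)) ≤
      ENNReal.ofReal (1 - (1 - θ) * (Real.log q / Real.log b)) := by
  refine dimH_gridLimit_sq_le (c := 8 * b) hb (by positivity) (card_singleton 0).le fun K ↦ ?_
  calc (#(blockPrefixes b f B (K + 1)) : ℝ)
      ≤ #(blockPrefixes b f B K) * (2 * b ^ f K * #(B K)) := by
        exact_mod_cast card_blockPrefixes_succ_le K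
    _ ≤ #(blockPrefixes b f B K) * (2 * b ^ f K *
          ((2 * (2 * K + 1 - f K : ℕ) * Real.log b + 1) * (b / q) ^ (2 * K + 1 - f K))) := by
        gcongr
        exact hB K
    _ ≤ _ := mul_le_mul_of_nonneg_left
        (two_mul_pow_mul_le_rpow hq hb (Nat.add_sub_cancel' (hf K)) (hfθ K)) (by positivity)

theorem exists_digitSeries_eq_of_mem_Icc (hb : 1 < b) {r : ℝ} (hr : r ∈ Set.Icc (0 : ℝ) 1) :
    ∃ d : ℕ → ℕ, (∀ i, d i < b) ∧ digitSeries b d = r := by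
  obtain ⟨w, -, rfl⟩ := Real.ofDigits_SurjOn hb hr
  exact ⟨fun i ↦ w i, fun i ↦ (w i).2, digitSeries_eq_ofDigits w⟩

theorem ofReal_le_dimH_image_add_digitSet_inter_gridLimit (hD : ∀ x ∈ D, x < b)
    (hgap : ∀ x ∈ D, x + 1 ∉ D) (hcard : 1 < #D) {f : ℕ → ℕ} {B : ℕ → Finset ℕ} {θ : ℝ}
    (hf : ∀ K, f K ≤ 2 * K + 1) (hfθ : ∀ K : ℕ, θ * (2 * K + 1) - 1 ≤ f K)
    (hB : ∀ K, ∀ d : ℕ → ℕ, (∀ i, d i < b) →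
      ∃ c : ℕ → ℕ, (∀ i, c i ∈ D) ∧ digitPrefix b (d + c) (2 * K + 1 - f K) ∈ B K)
    {r : ℝ} (hr : r ∈ Set.Icc (0 : ℝ) 1) :
    ENNReal.ofReal (θ * (Real.log #D / Real.log b)) ≤
      dimH ((· + r) '' digitSet b D ∩ gridLimit b 2 (· ^ 2) (blockPrefixes b f B)) := by
  have hb : 1 < b := hcard.trans_le (card_le_of_forall_lt hD)
  obtain ⟨d, hd, rfl⟩ := exists_digitSeries_eq_of_mem_Icc hb hr
  choose c hcD hcB using fun K ↦ hB K (fun j ↦ d (K ^ 2 + (f K + j))) fun j ↦ hd _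
  set E := freeDigitSet b D (IsFree f) (blockConcat f c)
  have hE : E ⊆ digitSet b D := Set.image_mono fun a ha ↦ ha.1
  have hbelow : ∀ θ' < θ, ENNReal.ofReal (θ' * (Real.log #D / Real.log b)) ≤ dimH E :=
    fun θ' hθ' ↦ ofReal_mul_log_div_log_le_dimH_freeDigitSet hD hgap hcard (fun i ↦ hcD _ _)
      (eventually_mul_le_count_isFree hf hfθ hθ')
  calc ENNReal.ofReal (θ * (Real.log #D / Real.log b)) ≤ dimH E := by
        have hcont : Continuous fun x ↦ ENNReal.ofReal (x * (Real.log #D / Real.log b)) :=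
          ENNReal.continuous_ofReal.comp (continuous_mul_const _)
        exact le_of_tendsto (hcont.continuousWithinAt (s := Set.Iio θ) (x := θ))
          (eventually_mem_nhdsWithin.mono hbelow)
    _ = dimH ((· + digitSeries b d) '' E) := ((isometry_add_right _).dimH_image E).symm
    _ ≤ _ := dimH_mono (Set.subset_inter (Set.image_mono hE)
        (image_add_freeDigitSet_subset_gridLimit hb hD hd hf hcB))

theorem exists_closed_dimH_le_and_le_dimH_inter (hD : ∀ x ∈ D, x < b)
    (hgap : ∀ x ∈ D, x + 1 ∉ D) (hcard : 1 < #D) {θ : ℝ} (hθ₀ : 0 ≤ θ) (hθ₁ : θ ≤ 1) :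
    ∃ F : Set ℝ, IsClosed F ∧
      dimH F ≤ ENNReal.ofReal (1 - (1 - θ) * (Real.log #D / Real.log b)) ∧
      ∀ r ∈ Set.Icc (0 : ℝ) 1, ENNReal.ofReal (θ * (Real.log #D / Real.log b)) ≤
        dimH ((· + r) '' digitSet b D ∩ F) := by
  set f : ℕ → ℕ := fun K ↦ ⌊θ * (2 * K + 1)⌋₊
  have hfθ : ∀ K : ℕ, f K ≤ θ * (2 * K + 1) := fun K ↦ Nat.floor_le (by positivity)
  have hθf : ∀ K : ℕ, θ * (2 * K + 1) - 1 ≤ f K := fun K ↦ (Nat.sub_one_lt_floor _).le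
  have hf : ∀ K, f K ≤ 2 * K + 1 := fun K ↦ by
    exact_mod_cast (hfθ K).trans (mul_le_of_le_one_left (by positivity) hθ₁)
  have hD₀ : 0 < #D := zero_lt_one.trans hcard
  choose B hBcard hB using fun K ↦ exists_card_le_forall_exists_digitPrefix_add_mem hD
    (card_pos.1 hD₀) (2 * K + 1 - f K)
  exact ⟨gridLimit b 2 (· ^ 2) (blockPrefixes b f B), isClosed_gridLimit,
    dimH_gridLimit_blockPrefixes_le hD₀ (hcard.trans_le (card_le_of_forall_lt hD)) hf hfθ hBcard,
    fun r hr ↦ ofReal_le_dimH_image_add_digitSet_inter_gridLimit hD hgap hcard hf hθf hB hr⟩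

theorem exists_closed_lowDim_meeting_translates_general (hD : ∀ x ∈ D, x < b)
    (hgap : ∀ x ∈ D, x + 1 ∉ D) (hcard : 1 < #D) (α : ℝ)
    (hα₁ : 1 - Real.log #D / Real.log b ≤ α) (hα₂ : α ≤ 1) :
    ∃ F : Set ℝ, IsClosed F ∧ dimH F ≤ ENNReal.ofReal α ∧
      ∀ r ∈ Set.Icc (0 : ℝ) 1, ENNReal.ofReal (α - 1 + Real.log #D / Real.log b) ≤
        dimH ((· + r) '' digitSet b D ∩ F) := by
  have hb : 1 < b := hcard.trans_le (card_le_of_forall_lt hD)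
  have hκ : 0 < Real.log #D / Real.log b :=
    div_pos (Real.log_pos (by exact_mod_cast hcard)) (Real.log_pos (by exact_mod_cast hb))
  set κ := Real.log #D / Real.log b with hκdef
  have hθ₀ : 0 ≤ 1 - (1 - α) / κ := by
    rw [sub_nonneg, div_le_one hκ]
    linarith
  have hθ₁ : 1 - (1 - α) / κ ≤ 1 := sub_le_self _ (div_nonneg (sub_nonneg.2 hα₂) hκ.le)
  obtain ⟨F, hclosed, hupper, hlower⟩ :=
    exists_closed_dimH_le_and_le_dimH_inter hD hgap hcard hθ₀ hθ₁
  have hα : 1 - (1 - (1 - (1 - α) / κ)) * κ = α := by field_simp; ring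
  have hβ : (1 - (1 - α) / κ) * κ = α - 1 + κ := by field_simp; ring
  rw [← hκdef, hα] at hupper
  simp only [← hκdef, hβ] at hlower
  exact ⟨F, hclosed, hupper, hlower⟩

theorem ternaryCantorSet_eq_digitSet : ternaryCantorSet = digitSet 3 {0, 2} := by
  ext x
  constructor
  · rintro ⟨a, ha, rfl⟩
    refine ⟨fun n ↦ ⌊a n⌋₊, fun n ↦ ?_, ?_⟩
    · rcases ha n with h | h <;> simp [h]
    · refine tsum_congr fun n ↦ ?_
      rcases ha n with h | h <;> simp [h]
  · rintro ⟨a, ha, rfl⟩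
    refine ⟨fun n ↦ a n, fun n ↦ ?_, by simp [digitSeries]⟩
    rcases mem_insert.1 (ha n) with h | h
    · simp [h]
    · simp [mem_singleton.1 h]

end MeetingTranslates

/-- Let `1 − log 2/log 3 ≤ α ≤ 1`.  There is a closed set `F ⊆ ℝ` with
`dim_H F ≤ α` such that for every `r ∈ [0,1]`,
`dim_H ((𝒞 + r) ∩ F) ≥ α − 1 + log 2/log 3`. -/
theorem exists_closed_lowDim_meeting_translates (α : ℝ)
    (hα₁ : 1 - Real.log 2 / Real.log 3 ≤ α) (hα₂ : α ≤ 1) :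
    ∃ F : Set ℝ, IsClosed F ∧ dimH F ≤ ENNReal.ofReal α ∧
      ∀ r ∈ Set.Icc (0 : ℝ) 1,
        ENNReal.ofReal (α - 1 + Real.log 2 / Real.log 3) ≤
          dimH (((· + r) '' ternaryCantorSet) ∩ F) := by
  simpa [ternaryCantorSet_eq_digitSet] using exists_closed_lowDim_meeting_translates_general
    (b := 3) (D := {0, 2}) (by simp) (by simp) (by simp) α (by simpa using hα₁) hα₂
end

section
/- Let A ⊆ ℝ, let {Iₙ} be a countable collection of intervals in ℝ, let aₙ > 0 for each n, and let c > 0. Suppose that for every x ∈ A one has ∑_{n : x ∈ Iₙ} aₙ > c. Then ∑ₙ aₙ |Iₙ| ≥ c · λ*(A), where λ* denotes Lebesgue outer measure and |Iₙ| is the length of the interval Iₙ. -/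
open MeasureTheory

/-!
Replacing each `I i` by a measurable hull changes no measure and only enlarges the covering sums.
After this replacement the weighted sum of the indicators of the `I i` is a measurable function with
integral `∑ i, a i * μ (I i)`; it is at least `c` on `A`, so the claim is Markov's inequality.
-/

open scoped ENNReal

section

variable {α ι : Type*} [Countable ι] {m : MeasurableSpace α} {μ : Measure α}

theorem lintegral_tsum_indicator_const {s : ι → Set α} (hs : ∀ i, NullMeasurableSet (s i) μ)
    (a : ι → ℝ≥0∞) :
    ∫⁻ x, ∑' i, (s i).indicator (fun _ ↦ a i) x ∂μ = ∑' i, a i * μ (s i) := by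
  rw [lintegral_tsum fun i ↦ aemeasurable_const.indicator₀ (hs i)]
  exact tsum_congr fun i ↦ lintegral_indicator_const₀ (hs i) (a i)

theorem mul_measure_le_tsum_of_nullMeasurableSet {A : Set α} {s : ι → Set α}
    (hs : ∀ i, NullMeasurableSet (s i) μ) {a : ι → ℝ≥0∞} {c : ℝ≥0∞}
    (hcover : ∀ x ∈ A, c ≤ ∑' i, (s i).indicator (fun _ ↦ a i) x) :
    c * μ A ≤ ∑' i, a i * μ (s i) :=
  calc c * μ A
      ≤ c * μ {x | c ≤ ∑' i, (s i).indicator (fun _ ↦ a i) x} := by gcongr; exact hcover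
    _ ≤ ∫⁻ x, ∑' i, (s i).indicator (fun _ ↦ a i) x ∂μ :=
        mul_meas_ge_le_lintegral₀
          (AEMeasurable.tsum fun i ↦ aemeasurable_const.indicator₀ (hs i)) c
    _ = ∑' i, a i * μ (s i) := lintegral_tsum_indicator_const hs a

theorem marstrand_covering_lemma_general {A : Set α} {I : ι → Set α} {a : ι → ℝ≥0∞} {c : ℝ≥0∞}
    (hcover : ∀ x ∈ A, c ≤ ∑' i : {i | x ∈ I i}, a i) :
    c * μ A ≤ ∑' i, a i * μ (I i) := by
  have hcover_hull : ∀ x ∈ A, c ≤ ∑' i, (toMeasurable μ (I i)).indicator (fun _ ↦ a i) x :=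
    fun x hx ↦ calc c
      _ ≤ ∑' i : {i | x ∈ I i}, a i := hcover x hx
      _ = ∑' i, (I i).indicator (fun _ ↦ a i) x := tsum_subtype {i | x ∈ I i} a
      _ ≤ ∑' i, (toMeasurable μ (I i)).indicator (fun _ ↦ a i) x := by
        gcongr with i
        exact subset_toMeasurable μ (I i)
  simpa only [measure_toMeasurable] using mul_measure_le_tsum_of_nullMeasurableSet (μ := μ)
    (fun i ↦ (measurableSet_toMeasurable μ (I i)).nullMeasurableSet) hcover_hull

end

/-- **Marstrand-type covering lemma.** Let `A ⊆ ℝ`, let `{Iₙ}` be a countable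
collection of intervals, `aₙ > 0`, `c > 0`.  If for every `x ∈ A` one has
`∑_{n : x ∈ Iₙ} aₙ > c`, then `∑ₙ aₙ |Iₙ| ≥ c · λ*(A)`, where `λ*` is Lebesgue
outer measure and `|Iₙ|` the length of `Iₙ`. -/
theorem marstrand_covering_lemma (A : Set ℝ) (I : ℕ → Set ℝ)
    (hI : ∀ n, (I n).OrdConnected) (a : ℕ → ℝ) (ha : ∀ n, 0 < a n)
    (c : ℝ) (hc : 0 < c)
    (hcover : ∀ x ∈ A, ENNReal.ofReal c < ∑' n : {n : ℕ | x ∈ I n}, ENNReal.ofReal (a n)) :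
    ENNReal.ofReal c * volume A ≤ ∑' n : ℕ, ENNReal.ofReal (a n) * volume (I n) :=
  marstrand_covering_lemma_general fun x hx ↦ (hcover x hx).le
end

section
/- (Mattila's density bound) Let μ be a Radon measure on ℝⁿ (a Borel measure finite on compact sets), let E ⊆ ℝⁿ, let 0 < λ < ∞ and α > 0. Suppose that for every x ∈ E, limsup_{δ→0⁺} μ(N_δ(x))/(2δ)^α ≤ λ, where N_δ(x) is the closed ball of radius δ centered at x. Then ℋ^α(E) ≥ μ(E)/(2^α λ), where μ(E) denotes the outer measure of E under μ. -/
open MeasureTheory Filter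
open scoped Topology ENNReal

/-!
If every ball of small radius `δ` centred in `F` has `μ`-mass at most `L (2δ)^α`, with one threshold
for all centres, then a small set `s` meeting `F` lies in a ball centred in `F` whose radius is the
diameter of `s`, so `μ (s ∩ F) ≤ 2^α L (diam s)^α`; summing over covers gives
`μ F ≤ 2^α L ℋ^α(F)`. The factor `2^α` comes from enclosing `s` in a ball of twice its diameter.
When the upper density is below `L` on `E`, the set `E` is the increasing union of its parts with
threshold `1 / k`, and `μ`, even as an outer measure, is continuous along increasing unions. Finally
let `L` decrease to the given bound.
-/

theorem map_ofReal_nhdsGT_zero : map ENNReal.ofReal (𝓝[>] 0) = 𝓝[>] (0 : ℝ≥0∞) := by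
  have tendsto_ofReal : Tendsto ENNReal.ofReal (𝓝[>] 0) (𝓝[>] 0) :=
    tendsto_nhdsWithin_iff.2
      ⟨by simpa using (ENNReal.continuous_ofReal.tendsto 0).mono_left nhdsWithin_le_nhds,
        eventually_mem_nhdsWithin.mono fun _ hδ => ENNReal.ofReal_pos.2 hδ⟩
  have eventually_finite : ∀ᶠ δ : ℝ≥0∞ in 𝓝[>] 0, δ < ∞ :=
    nhdsWithin_le_nhds (Iio_mem_nhds ENNReal.zero_lt_top)
  have tendsto_toReal : Tendsto ENNReal.toReal (𝓝[>] 0) (𝓝[>] 0) :=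
    tendsto_nhdsWithin_iff.2
      ⟨(ENNReal.tendsto_toReal ENNReal.zero_ne_top).mono_left nhdsWithin_le_nhds, by
        filter_upwards [eventually_finite, self_mem_nhdsWithin] with δ hfin hpos
        exact ENNReal.toReal_pos hpos.ne' hfin.ne⟩
  exact le_antisymm tendsto_ofReal <|
    le_map_of_right_inverse (eventually_finite.mono fun _ hδ => ENNReal.ofReal_toReal hδ.ne)
      tendsto_toReal

/-- The upper `α`-density of `μ` at `x`, normalised by the diameter `2δ` of the ball. Radii are
extended nonnegative reals so that the notion makes sense in every extended pseudometric space. -/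
noncomputable def upperDensity {X : Type*} [PseudoEMetricSpace X] [MeasurableSpace X]
    (μ : Measure X) (α : ℝ) (x : X) : ℝ≥0∞ :=
  limsup (fun δ => μ (Metric.closedEBall x δ) / (2 * δ) ^ α) (𝓝[>] 0)

theorem upperDensity_eq_limsup_closedBall {X : Type*} [PseudoMetricSpace X] [MeasurableSpace X]
    (μ : Measure X) (α : ℝ) (x : X) :
    upperDensity μ α x =
      limsup (fun δ : ℝ => μ (Metric.closedBall x δ) / ENNReal.ofReal ((2 * δ) ^ α))
        (𝓝[>] 0) := by
  rw [upperDensity, ← map_ofReal_nhdsGT_zero, ← limsup_comp]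
  refine limsup_congr (eventually_mem_nhdsWithin.mono fun δ (hδ : 0 < δ) => ?_)
  rw [Function.comp_apply, Metric.closedEBall_ofReal hδ.le,
    ← ENNReal.ofReal_rpow_of_pos (by positivity), ENNReal.ofReal_mul zero_le_two,
    ENNReal.ofReal_ofNat]

section UniformDensity

variable {X : Type*} [PseudoEMetricSpace X] [MeasurableSpace X] {μ : Measure X} {F s : Set X}
  {x : X} {α : ℝ} {r L : ℝ≥0∞}

/-- The points at which every ball of radius less than `r` has density ratio at most `L`: the part
of the space where a bound on the upper density holds with the uniform threshold `r`. -/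
def uniformDensitySet (μ : Measure X) (α : ℝ) (L r : ℝ≥0∞) : Set X :=
  {x | ∀ δ ∈ Set.Ioo 0 r, μ (Metric.closedEBall x δ) / (2 * δ) ^ α ≤ L}

theorem uniformDensitySet_anti : Antitone (uniformDensitySet μ α L) :=
  fun _ _ hr _ hx δ hδ => hx δ ⟨hδ.1, hδ.2.trans_le hr⟩

theorem exists_mem_uniformDensitySet (hx : upperDensity μ α x < L) :
    ∃ k : ℕ, x ∈ uniformDensitySet μ α L (k : ℝ≥0∞)⁻¹ := by
  obtain ⟨r, hr, hIoo⟩ := (mem_nhdsGT_iff_exists_Ioo_subset' ENNReal.zero_lt_top).1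
    (eventually_lt_of_limsup_lt hx)
  obtain ⟨k, hk⟩ := ENNReal.exists_inv_nat_lt (Set.mem_Ioi.1 hr).ne'
  exact ⟨k, fun δ hδ => (hIoo ⟨hδ.1, hδ.2.trans hk⟩).le⟩

theorem measure_closedEBall_le_of_mem_uniformDensitySet
    (hx : x ∈ uniformDensitySet μ α L r) {δ : ℝ≥0∞} (hδ : δ ∈ Set.Ioo 0 r) :
    μ (Metric.closedEBall x δ) ≤ L * (2 * δ) ^ α := by
  have pos : 0 < 2 * δ := ENNReal.mul_pos two_ne_zero hδ.1.ne'
  have ne_top : 2 * δ ≠ ∞ := ENNReal.mul_ne_top ENNReal.ofNat_ne_top hδ.2.ne_top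
  exact (ENNReal.div_le_iff (ENNReal.rpow_pos pos ne_top).ne'
    (ENNReal.rpow_ne_top_of_ne_zero pos.ne' ne_top)).1 (hx δ hδ)

theorem measure_inter_le_of_subset_uniformDensitySet (hL : L ≠ ∞)
    (hF : F ⊆ uniformDensitySet μ α L r) (hs : Metric.ediam s < r) :
    μ (s ∩ F) ≤ L * (2 * Metric.ediam s) ^ α := by
  obtain hempty | ⟨x, hxs, hxF⟩ := (s ∩ F).eq_empty_or_nonempty
  · simp [hempty]
  -- The ball of radius `ediam s` suffices, but its radius may be zero.
  have bound : ∀ δ ∈ Set.Ioo (Metric.ediam s) r, μ (s ∩ F) ≤ L * (2 * δ) ^ α := fun δ hδ =>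
    have subset_ball : s ∩ F ⊆ Metric.closedEBall x δ := fun y hy =>
      (Metric.edist_le_ediam_of_mem hy.1 hxs).trans hδ.1.le
    (measure_mono subset_ball).trans <|
      measure_closedEBall_le_of_mem_uniformDensitySet (hF hxF) ⟨bot_le.trans_lt hδ.1, hδ.2⟩
  have continuous_bound : Continuous fun δ : ℝ≥0∞ => L * (2 * δ) ^ α :=
    (ENNReal.continuous_const_mul hL).comp <|
      ENNReal.continuous_rpow_const.comp (ENNReal.continuous_const_mul ENNReal.ofNat_ne_top)
  have := nhdsGT_neBot_of_exists_gt ⟨r, hs⟩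
  exact ge_of_tendsto (continuous_bound.continuousWithinAt (s := Set.Ioi _))
    (eventually_of_mem (Ioo_mem_nhdsGT hs) bound)

end UniformDensity

section HausdorffMeasure

variable {X : Type*} [EMetricSpace X] [MeasurableSpace X] [BorelSpace X] {μ : Measure X}
  {E F : Set X} {α : ℝ} {c l r L : ℝ≥0∞}

theorem measure_div_le_hausdorffMeasure_of_ediam_le (hr : 0 < r)
    (hF : ∀ s, Metric.ediam s ≤ r → μ (s ∩ F) ≤ c * Metric.ediam s ^ α) :
    μ F / c ≤ μH[α] F := by
  -- Restricting outer measures, unlike restricting measures, is harmless for non-measurable `F`.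
  have h : c⁻¹ • OuterMeasure.restrict F μ.toOuterMeasure ≤
      OuterMeasure.mkMetric fun d => d ^ α := by
    refine OuterMeasure.le_mkMetric _ _ r hr fun s hs => ?_
    rw [smul_apply, OuterMeasure.restrict_apply, smul_eq_mul, mul_comm,
      ← div_eq_mul_inv]
    exact ENNReal.div_le_of_le_mul' (hF s hs)
  rw [← Measure.mkMetric_toOuterMeasure] at h
  calc μ F / c = (c⁻¹ • OuterMeasure.restrict F μ.toOuterMeasure) F := by
        simp [ENNReal.div_eq_inv_mul]
    _ ≤ μH[α] F := h F

theorem measure_div_le_hausdorffMeasure_of_subset_uniformDensitySet (hL : L ≠ ∞)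
    (hr : 0 < r) (hF : F ⊆ uniformDensitySet μ α L r) :
    μ F / (2 ^ α * L) ≤ μH[α] F := by
  obtain ⟨r', hr', hlt⟩ := exists_between hr
  refine measure_div_le_hausdorffMeasure_of_ediam_le hr' fun s hs => ?_
  calc μ (s ∩ F) ≤ L * (2 * Metric.ediam s) ^ α :=
        measure_inter_le_of_subset_uniformDensitySet hL hF (hs.trans_lt hlt)
    _ = 2 ^ α * L * Metric.ediam s ^ α := by
        rw [ENNReal.mul_rpow_of_ne_top ENNReal.ofNat_ne_top (hs.trans_lt hlt).ne_top]
        ring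

theorem measure_div_le_hausdorffMeasure_of_upperDensity_lt (hL : L ≠ ∞)
    (hE : ∀ x ∈ E, upperDensity μ α x < L) :
    μ E / (2 ^ α * L) ≤ μH[α] E := by
  let part (k : ℕ) : Set X := E ∩ uniformDensitySet μ α L (k : ℝ≥0∞)⁻¹
  have part_mono : Monotone part := fun i j hij =>
    Set.inter_subset_inter_right E <|
      uniformDensitySet_anti (ENNReal.inv_le_inv.2 (Nat.cast_le.2 hij))
  have iUnion_part : ⋃ k, part k = E := by
    rw [← Set.inter_iUnion, Set.inter_eq_left]
    exact fun x hx => Set.mem_iUnion.2 (exists_mem_uniformDensitySet (hE x hx))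
  calc μ E / (2 ^ α * L) = ⨆ k, μ (part k) / (2 ^ α * L) := by
        rw [← ENNReal.iSup_div, ← part_mono.measure_iUnion, iUnion_part]
    _ ≤ μH[α] E := iSup_le fun k =>
        (measure_div_le_hausdorffMeasure_of_subset_uniformDensitySet hL
          (ENNReal.inv_pos.2 (ENNReal.natCast_ne_top k)) Set.inter_subset_right).trans
          (measure_mono Set.inter_subset_left)

theorem mattila_density_bound_general (hE : ∀ x ∈ E, upperDensity μ α x ≤ l) :
    μ E / (2 ^ α * l) ≤ μH[α] E := by
  have two_rpow_pos : (0 : ℝ≥0∞) < 2 ^ α := ENNReal.rpow_pos two_pos ENNReal.ofNat_ne_top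
  have two_rpow_ne_top : (2 : ℝ≥0∞) ^ α ≠ ∞ :=
    ENNReal.rpow_ne_top_of_ne_zero two_ne_zero ENNReal.ofNat_ne_top
  obtain rfl | hl := eq_or_ne l ∞
  · simp [ENNReal.mul_top two_rpow_pos.ne']
  have tendsto_bound : Tendsto (fun L => μ E / (2 ^ α * L)) (𝓝[>] l) (𝓝 (μ E / (2 ^ α * l))) :=
    ENNReal.Tendsto.const_div
      ((ENNReal.continuous_const_mul two_rpow_ne_top).continuousWithinAt)
      (Or.inl (ENNReal.mul_ne_top two_rpow_ne_top hl))
  have := nhdsGT_neBot_of_exists_gt ⟨∞, hl.lt_top⟩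
  refine le_of_tendsto tendsto_bound ?_
  filter_upwards [Ioo_mem_nhdsGT hl.lt_top] with L hL
  exact measure_div_le_hausdorffMeasure_of_upperDensity_lt hL.2.ne
    fun x hx => (hE x hx).trans_lt hL.1

end HausdorffMeasure

/-- **Mattila's density bound.** Let `μ` be a Borel measure on `ℝⁿ` that is finite on
compact sets, `E ⊆ ℝⁿ`, `0 < l < ∞`, `α > 0`.  If for every `x ∈ E`,
`limsup_{δ→0⁺} μ(N_δ(x))/(2δ)^α ≤ l`, then `ℋ^α(E) ≥ μ(E)/(2^α l)`. -/
theorem mattila_density_bound {n : ℕ} (μ : Measure (EuclideanSpace ℝ (Fin n)))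
    [IsFiniteMeasureOnCompacts μ] (E : Set (EuclideanSpace ℝ (Fin n)))
    (α : ℝ) (hα : 0 < α) (l : ℝ) (hl : 0 < l)
    (hdens : ∀ x ∈ E,
      Filter.limsup (fun δ : ℝ => μ (Metric.closedBall x δ) / ENNReal.ofReal ((2 * δ) ^ α))
        (𝓝[>] (0 : ℝ)) ≤ ENNReal.ofReal l) :
    μ E / ENNReal.ofReal (2 ^ α * l) ≤ μH[α] E := by
  rw [ENNReal.ofReal_mul (by positivity), ← ENNReal.ofReal_rpow_of_pos two_pos,
    ENNReal.ofReal_ofNat]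
  exact mattila_density_bound_general fun x hx =>
    (upperDensity_eq_limsup_closedBall μ α x).trans_le (hdens x hx)
end

section
/- Let α be a real number with 1 − log 2/log 3 < α < 1, let D = (1 − α)/(log 2/log 3), let A = {⌊y/D⌋ : y a positive integer}, and let Ā be the complement of A in the positive integers. Then the (α − 1 + log 2/log 3)-dimensional Hausdorff measure of 𝒞_{Ā} is strictly positive. -/
open MeasureTheory
open scoped ENNReal

/-- `𝒞_A`: reals `∑_{n≥1} aₙ 3⁻ⁿ` where each `aₙ ∈ {0,2}` and `aₙ = 2` only
for positions `n ∈ A`. -/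
def cantorSetRestricted (A : Set ℕ) : Set ℝ :=
  {x | ∃ a : ℕ → ℝ, (∀ n, a n = 0 ∨ a n = 2) ∧ (∀ n, a n = 2 → (n + 1) ∈ A) ∧
    x = ∑' n : ℕ, a n / 3 ^ (n + 1)}

/-!
Rayleigh's theorem identifies the complement of `{⌊y / D⌋}` with the sequence `⌈k / (1 - D)⌉ - 1`,
so the `k`-th free ternary place of `𝒞_{Ā}` lies at depth at most `(k + 1) / (1 - D)`. Placing the
binary digits of `t ∈ [0, 1]` in these places gives points of `𝒞_{Ā}`; if two digit sequences first
differ at index `k`, the numbers `t` differ by at most `2⁻ᵏ` and the points by at least `3` to the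
power minus the depth of the `k`-th place. Hence the points determine `t` in a Hölder way, with
exponent `(1 - D) log 2 / log 3 = α - 1 + log 2 / log 3`, and a null set cannot be mapped onto
`[0, 1]` by such a map.
-/

open scoped NNReal

lemma hausdorffMeasure_range_le_of_edist_le_mul_rpow {ι X Y : Type*}
    [EMetricSpace X] [MeasurableSpace X] [BorelSpace X]
    [EMetricSpace Y] [MeasurableSpace Y] [BorelSpace Y]
    {g : ι → X} {h : ι → Y} {C r : ℝ≥0} (hr : 0 < r)
    (hgh : ∀ i j, edist (h i) (h j) ≤ C * edist (g i) (g j) ^ (r : ℝ)) {d : ℝ} (hd : 0 ≤ d) :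
    μH[d] (Set.range h) ≤ (C : ℝ≥0∞) ^ d * μH[r * d] (Set.range g) := by
  rcases isEmpty_or_nonempty ι with hι | ⟨⟨i₀⟩⟩
  · simp only [Set.range_eq_empty, measure_empty, zero_le]
  have h_factors : h.FactorsThrough g := fun i j hij => by
    simpa [hij, hr] using hgh i j
  let f : X → Y := Function.extend g h fun _ => h i₀
  have f_apply : ∀ i, f (g i) = h i := h_factors.extend_apply _
  have f_holder : HolderOnWith C r f (Set.range g) := by
    rintro _ ⟨i, rfl⟩ _ ⟨j, rfl⟩
    simpa only [f_apply] using hgh i j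
  have f_image : f '' Set.range g = Set.range h := by
    rw [← Set.range_comp]
    exact congrArg Set.range (funext f_apply)
  simpa only [f_image] using f_holder.hausdorffMeasure_image_le hr hd

lemma inv_pow_rpow_mul_logb {b x : ℝ} (hb : 1 < b) (hx : 0 < x) (n : ℕ) (c : ℝ) :
    ((b ^ n)⁻¹) ^ (c * Real.logb b x) = x ^ (-(c * n)) := by
  have hb₀ : 0 < b := zero_lt_one.trans hb
  calc ((b ^ n)⁻¹) ^ (c * Real.logb b x)
      = b ^ (-(n : ℝ) * (c * Real.logb b x)) := by
        rw [← Real.rpow_natCast, ← Real.rpow_neg hb₀.le, ← Real.rpow_mul hb₀.le]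
    _ = (b ^ Real.logb b x) ^ (-(c * n)) := by
        rw [← Real.rpow_mul hb₀.le]
        ring_nf
    _ = x ^ (-(c * n)) := by rw [Real.rpow_logb hb₀ hb.ne' hx]

section Digits

lemma sub_one_mul_inv_pow_le_abs_ofDigits_sub {b : ℕ} {x y : ℕ → Fin b} {m : ℕ}
    (hxy : ∀ i < m, x i = y i) :
    (|((x m : ℕ) : ℝ) - (y m : ℕ)| - 1) * ((b : ℝ) ^ (m + 1))⁻¹ ≤
      |Real.ofDigits x - Real.ofDigits y| := by
  set u := Real.ofDigits fun i => x (i + (m + 1))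
  set v := Real.ofDigits fun i => y (i + (m + 1))
  have head_sum_eq : ∑ i ∈ Finset.range m, Real.ofDigitsTerm x i =
      ∑ i ∈ Finset.range m, Real.ofDigitsTerm y i :=
    Finset.sum_congr rfl fun i hi => by
      simp only [Real.ofDigitsTerm, hxy i (Finset.mem_range.mp hi)]
  have sub_eq : Real.ofDigits x - Real.ofDigits y =
      (((x m : ℕ) : ℝ) - (y m : ℕ) - (v - u)) * ((b : ℝ) ^ (m + 1))⁻¹ := by
    rw [Real.ofDigits_eq_sum_add_ofDigits x (m + 1), Real.ofDigits_eq_sum_add_ofDigits y (m + 1),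
      Finset.sum_range_succ, Finset.sum_range_succ, head_sum_eq]
    simp only [Real.ofDigitsTerm]
    ring
  have tail_le : |v - u| ≤ 1 := by
    simpa using Real.abs_ofDigits_sub_ofDigits_le (n := 0)
      (x := fun i => y (i + (m + 1))) (y := fun i => x (i + (m + 1))) (by simp)
  rw [sub_eq, abs_mul, abs_of_nonneg (by positivity : 0 ≤ ((b : ℝ) ^ (m + 1))⁻¹)]
  gcongr
  exact (sub_le_sub_left tail_le _).trans (abs_sub_abs_le_abs_sub _ _)

/-- The Cantor-type ternary digit sequence that carries the binary digit `d k`, with `1` replaced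
by `2`, at index `φ k`, and `0` at every index outside the range of `φ`. Like the digits of
`Real.ofDigits`, indices start at `0`, so index `n` has weight `3⁻⁽ⁿ⁺¹⁾`. -/
noncomputable def spreadDigits (φ : ℕ → ℕ) (d : ℕ → Fin 2) : ℕ → Fin 3 :=
  Function.extend φ (fun k => ![0, 2] (d k)) 0

variable {φ : ℕ → ℕ} {d d' : ℕ → Fin 2}

lemma spreadDigits_apply (hφ : φ.Injective) (k : ℕ) :
    spreadDigits φ d (φ k) = ![0, 2] (d k) :=
  hφ.extend_apply _ _ k

lemma spreadDigits_of_notMem_range {n : ℕ} (hn : n ∉ Set.range φ) : spreadDigits φ d n = 0 :=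
  Function.extend_apply' _ _ n hn

lemma spreadDigits_eq_of_lt (hφ : StrictMono φ) {k : ℕ} (hd : ∀ j < k, d j = d' j) {n : ℕ}
    (hn : n < φ k) : spreadDigits φ d n = spreadDigits φ d' n := by
  by_cases hn_range : n ∈ Set.range φ
  · obtain ⟨j, rfl⟩ := hn_range
    rw [spreadDigits_apply hφ.injective, spreadDigits_apply hφ.injective,
      hd j (hφ.lt_iff_lt.mp hn)]
  · rw [spreadDigits_of_notMem_range hn_range, spreadDigits_of_notMem_range hn_range]

lemma ofDigits_spreadDigits_mem_cantorSetRestricted (hφ : φ.Injective) {B : Set ℕ}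
    (hB : ∀ k, φ k + 1 ∈ B) (d : ℕ → Fin 2) :
    Real.ofDigits (spreadDigits φ d) ∈ cantorSetRestricted B := by
  refine ⟨fun n => ((spreadDigits φ d n : ℕ) : ℝ), fun n => ?_, fun n hn => ?_, ?_⟩
  · by_cases hn : n ∈ Set.range φ
    · obtain ⟨k, rfl⟩ := hn
      simp only [spreadDigits_apply hφ]
      generalize d k = e
      fin_cases e <;> simp
    · simp [spreadDigits_of_notMem_range hn]
  · by_contra hnB
    have hn_range : n ∉ Set.range φ := by
      rintro ⟨k, rfl⟩
      exact hnB (hB k)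
    simp [spreadDigits_of_notMem_range hn_range] at hn
  · simp only [Real.ofDigits, Real.ofDigitsTerm, div_eq_mul_inv, Nat.cast_ofNat]

lemma inv_pow_le_abs_ofDigits_spreadDigits_sub (hφ : StrictMono φ) {k : ℕ}
    (hd : ∀ j < k, d j = d' j) (hk : d k ≠ d' k) :
    ((3 : ℝ) ^ (φ k + 1))⁻¹ ≤
      |Real.ofDigits (spreadDigits φ d) - Real.ofDigits (spreadDigits φ d')| := by
  have digit_gap :
      |((spreadDigits φ d (φ k) : ℕ) : ℝ) - (spreadDigits φ d' (φ k) : ℕ)| = 2 := by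
    rw [spreadDigits_apply hφ.injective, spreadDigits_apply hφ.injective]
    generalize d k = e at *
    generalize d' k = e' at *
    fin_cases e <;> fin_cases e' <;> simp_all
  have gap := sub_one_mul_inv_pow_le_abs_ofDigits_sub
    fun _ hn => spreadDigits_eq_of_lt hφ hd hn
  rw [digit_gap, Nat.cast_ofNat] at gap
  linarith

lemma abs_ofDigits_sub_le_mul_rpow_abs_spreadDigits_sub (hφ : StrictMono φ) {c C : ℝ}
    (hc : 0 ≤ c) (hφ_le : ∀ k, c * (φ k + 1) ≤ k + C) (d d' : ℕ → Fin 2) :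
    |Real.ofDigits d - Real.ofDigits d'| ≤
      2 ^ C * |Real.ofDigits (spreadDigits φ d) - Real.ofDigits (spreadDigits φ d')| ^
        (c * Real.logb 3 2) := by
  rcases eq_or_ne d d' with rfl | hne
  · rw [sub_self, abs_zero]
    positivity
  set k := PiNat.firstDiff d d'
  have hd : ∀ j < k, d j = d' j := fun _ => PiNat.apply_eq_of_lt_firstDiff
  have hk : d k ≠ d' k := PiNat.apply_firstDiff_ne hne
  have logb_nonneg : 0 ≤ Real.logb 3 2 := Real.logb_nonneg (by norm_num) (by norm_num)
  calc |Real.ofDigits d - Real.ofDigits d'|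
      ≤ 2 ^ (-(k : ℝ)) := by
        simpa [Real.rpow_neg] using Real.abs_ofDigits_sub_ofDigits_le hd
    _ ≤ 2 ^ (C + -(c * (φ k + 1 : ℕ))) := by
        apply Real.rpow_le_rpow_of_exponent_le one_le_two
        push_cast
        linarith [hφ_le k]
    _ = 2 ^ C * (((3 : ℝ) ^ (φ k + 1))⁻¹) ^ (c * Real.logb 3 2) := by
        rw [Real.rpow_add two_pos, inv_pow_rpow_mul_logb (by norm_num) two_pos]
    _ ≤ _ := by
        gcongr
        exact inv_pow_le_abs_ofDigits_spreadDigits_sub hφ hd hk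

lemma one_le_hausdorffMeasure_range_ofDigits {b : ℕ} (hb : 1 < b) :
    1 ≤ μH[1] (Set.range (Real.ofDigits (b := b))) := by
  calc (1 : ℝ≥0∞) = μH[1] (Set.Icc (0 : ℝ) 1) := by simp [hausdorffMeasure_real]
    _ ≤ μH[1] (Set.range (Real.ofDigits (b := b))) := by
        rw [← Set.image_univ]
        exact measure_mono (Real.ofDigits_SurjOn hb)

theorem hausdorffMeasure_cantorSetRestricted_pos_of_strictMono (hφ : StrictMono φ) {B : Set ℕ}
    (hB : ∀ k, φ k + 1 ∈ B) {c C : ℝ} (hc : 0 < c) (hφ_le : ∀ k, c * (φ k + 1) ≤ k + C) :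
    0 < μH[c * Real.logb 3 2] (cantorSetRestricted B) := by
  have exponent_pos : 0 < c * Real.logb 3 2 :=
    mul_pos hc (Real.logb_pos (by norm_num) (by norm_num))
  lift c * Real.logb 3 2 to ℝ≥0 using exponent_pos.le with r hr
  have holder (d d' : ℕ → Fin 2) : edist (Real.ofDigits d) (Real.ofDigits d') ≤
      ((2 ^ C : ℝ≥0) : ℝ≥0∞) *
        edist (Real.ofDigits (spreadDigits φ d)) (Real.ofDigits (spreadDigits φ d')) ^ (r : ℝ) := by
    have := abs_ofDigits_sub_le_mul_rpow_abs_spreadDigits_sub hφ hc.le hφ_le d d'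
    rw [← hr, ← Real.dist_eq, ← Real.dist_eq] at this
    rw [edist_nndist, edist_nndist, ← ENNReal.coe_rpow_of_nonneg _ r.coe_nonneg]
    exact_mod_cast this
  have one_le : 1 ≤ ((2 ^ C : ℝ≥0) : ℝ≥0∞) *
      μH[r] (Set.range fun d => Real.ofDigits (spreadDigits φ d)) := by
    simpa only [ENNReal.rpow_one, mul_one] using
      (one_le_hausdorffMeasure_range_ofDigits one_lt_two).trans
        (hausdorffMeasure_range_le_of_edist_le_mul_rpow (mod_cast exponent_pos) holder zero_le_one)
  calc 0 < μH[r] (Set.range fun d => Real.ofDigits (spreadDigits φ d)) :=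
        pos_of_mul_pos_right (zero_lt_one.trans_le one_le) zero_le
    _ ≤ μH[r] (cantorSetRestricted B) := measure_mono <| Set.range_subset_iff.mpr fun d =>
        ofDigits_spreadDigits_mem_cantorSetRestricted hφ.injective hB d

end Digits

section Beatty

variable {s : ℝ}

lemma beattySeq'_lt_mul (s : ℝ) (k : ℤ) : (beattySeq' s k : ℝ) < k * s := by
  rw [beattySeq', Int.cast_sub, Int.cast_one, sub_lt_iff_lt_add]
  exact Int.ceil_lt_add_one _

lemma beattySeq'_strictMono (hs : 1 ≤ s) : StrictMono (beattySeq' s) := by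
  intro j k hjk
  have hjk' : (j : ℝ) + 1 ≤ k := mod_cast hjk
  have ceil_lt : ⌈j * s⌉ + 1 ≤ ⌈k * s⌉ := by
    rw [← Int.ceil_add_one]
    exact Int.ceil_le_ceil (by nlinarith)
  simp only [beattySeq']
  lia

lemma beattySeq'_pos (hs : 1 < s) {k : ℤ} (hk : 0 < k) : 0 < beattySeq' s k := by
  have hk' : (1 : ℝ) ≤ k := mod_cast hk
  rw [beattySeq', sub_pos, Int.lt_ceil, Int.cast_one]
  nlinarith

lemma exists_strictMono_cast_add_one_eq_beattySeq' (hs : 1 < s) :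
    ∃ φ : ℕ → ℕ, StrictMono φ ∧ ∀ k : ℕ, ((φ k + 1 : ℕ) : ℤ) = beattySeq' s (k + 1) := by
  have hφ (k : ℕ) : (((beattySeq' s (k + 1) - 1).toNat + 1 : ℕ) : ℤ) = beattySeq' s (k + 1) := by
    have := beattySeq'_pos hs (k := k + 1) (by positivity)
    lia
  refine ⟨fun k => (beattySeq' s (k + 1) - 1).toNat, fun j k hjk => ?_, hφ⟩
  have := beattySeq'_strictMono hs.le (show (j : ℤ) + 1 < k + 1 by lia)
  rw [← hφ, ← hφ] at this
  lia

lemma exists_strictMono_forall_add_one_ne_beattySeq {r : ℝ} (hrs : r.HolderConjugate s) :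
    ∃ φ : ℕ → ℕ, StrictMono φ ∧ (∀ (k : ℕ) (j : ℤ), ((φ k + 1 : ℕ) : ℤ) ≠ beattySeq r j) ∧
      ∀ k : ℕ, (φ k + 1 : ℝ) < (k + 1) * s := by
  obtain ⟨φ, φ_mono, hφ⟩ := exists_strictMono_cast_add_one_eq_beattySeq' hrs.symm.lt
  refine ⟨φ, φ_mono, fun k j hj => ?_, fun k => ?_⟩
  · have mem_compl : ((φ k + 1 : ℕ) : ℤ) ∈ {beattySeq r j | j}ᶜ := by
      rw [compl_beattySeq hrs]
      exact ⟨k + 1, (hφ k).symm⟩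
    exact mem_compl ⟨j, hj.symm⟩
  · simpa [← hφ] using beattySeq'_lt_mul s (k + 1)

end Beatty

/-- Let `1 − log 2/log 3 < α < 1`, `D = (1 − α)/(log 2/log 3)`,
`A = {⌊y/D⌋ : y a positive integer}`, `Ā` its complement in the positive
integers.  Then `ℋ^{α − 1 + log 2/log 3}(𝒞_{Ā}) > 0`. -/
theorem hausdorffMeasure_cantorSetRestricted_compl_pos (α : ℝ)
    (hα₁ : 1 - Real.log 2 / Real.log 3 < α) (hα₂ : α < 1)
    (D : ℝ) (hD : D = (1 - α) / (Real.log 2 / Real.log 3))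
    (A : Set ℕ) (hA : A = {m : ℕ | ∃ y : ℕ, 0 < y ∧ (m : ℤ) = ⌊(y : ℝ) / D⌋}) :
    0 < μH[α - 1 + Real.log 2 / Real.log 3]
      (cantorSetRestricted {m : ℕ | 0 < m ∧ m ∉ A}) := by
  have log_ratio_pos : 0 < Real.log 2 / Real.log 3 :=
    Real.logb_pos (by norm_num) (by norm_num)
  have D_pos : 0 < D := hD ▸ div_pos (by linarith) log_ratio_pos
  have D_lt_one : D < 1 := hD ▸ (div_lt_one log_ratio_pos).mpr (by linarith)
  have conj : (D⁻¹).HolderConjugate (1 - D)⁻¹ := .inv_one_sub_inv D_pos D_lt_one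
  obtain ⟨φ, φ_mono, φ_ne, φ_lt⟩ := exists_strictMono_forall_add_one_ne_beattySeq conj
  have φ_mem (k : ℕ) : φ k + 1 ∈ {m : ℕ | 0 < m ∧ m ∉ A} := by
    refine ⟨Nat.succ_pos _, ?_⟩
    rw [hA]
    rintro ⟨y, -, hy⟩
    exact φ_ne k y (by simpa [beattySeq, div_eq_mul_inv] using hy)
  have φ_le (k : ℕ) : (1 - D) * (φ k + 1) ≤ k + 1 := by
    rw [← le_div_iff₀' (sub_pos.mpr D_lt_one), div_eq_mul_inv]
    exact (φ_lt k).le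
  have exponent_eq : α - 1 + Real.log 2 / Real.log 3 = (1 - D) * Real.logb 3 2 := by
    rw [← Real.log_div_log, sub_mul, hD, div_mul_cancel₀ _ log_ratio_pos.ne']
    ring
  rw [exponent_eq]
  exact hausdorffMeasure_cantorSetRestricted_pos_of_strictMono φ_mono φ_mem
    (sub_pos.mpr D_lt_one) φ_le
end

section
/- Let D be a real number with 0 < D < 1, let A = {⌊y/D⌋ : y a positive integer}, and let u₁ < u₂ < u₃ < … enumerate the positive integers not in A. Then there exists a fixed number t such that uₙ ≤ (n + t)/(1 − D) for every positive integer n. -/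
/-!
Each integer in `[1, uₙ]` is either one of `u₁, …, uₙ` or a member of `A`, so
`uₙ ≤ n + #(A ∩ [1, uₙ])`. Since `⌊y / D⌋ ≤ N` forces `y < D (N + 1)`, the set `A` has at most
`D (N + 1)` members up to `N`. Hence `uₙ ≤ n + D uₙ + D`, and `t = D` works.
-/

open Set

theorem le_add_ncard_inter_Icc_of_strictMono {A : Set ℕ} {u : ℕ → ℕ} (hu : StrictMono u)
    (hrange : {m | 0 < m ∧ m ∉ A} ⊆ range u) (n : ℕ) :
    u n ≤ n + 1 + (A ∩ Icc 1 (u n)).ncard := by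
  have hcover : Icc 1 (u n) ⊆ u '' Iic n ∪ A ∩ Icc 1 (u n) := by
    intro m hm
    by_cases hmA : m ∈ A
    · exact .inr ⟨hmA, hm⟩
    · obtain ⟨k, rfl⟩ := hrange ⟨hm.1, hmA⟩
      exact .inl (mem_image_of_mem u (hu.le_iff_le.1 hm.2))
  calc u n = (Icc 1 (u n)).ncard := by simp
    _ ≤ (u '' Iic n ∪ A ∩ Icc 1 (u n)).ncard :=
      ncard_le_ncard hcover (((finite_Iic n).image u).union ((finite_Icc 1 (u n)).inter_of_right A))
    _ ≤ (u '' Iic n).ncard + (A ∩ Icc 1 (u n)).ncard := ncard_union_le _ _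
    _ = n + 1 + (A ∩ Icc 1 (u n)).ncard := by
      rw [ncard_image_of_injective _ hu.injective, ncard_Iic_nat]

theorem le_div_one_sub_of_ncard_inter_Icc_le {A : Set ℕ} {u : ℕ → ℕ} (hu : StrictMono u)
    (hrange : {m | 0 < m ∧ m ∉ A} ⊆ range u) {D c : ℝ} (hD1 : D < 1)
    (hcount : ∀ N : ℕ, ((A ∩ Icc 1 N).ncard : ℝ) ≤ D * N + c) (n : ℕ) :
    (u n : ℝ) ≤ ((n + 1 : ℕ) + c) / (1 - D) := by
  have hle : (u n : ℝ) ≤ (n + 1 : ℕ) + (A ∩ Icc 1 (u n)).ncard :=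
    mod_cast le_add_ncard_inter_Icc_of_strictMono hu hrange n
  rw [le_div_iff₀ (sub_pos.2 hD1)]
  linarith [hcount (u n)]

theorem le_floor_mul_add_one_of_floor_div_le {D : ℝ} (hD0 : 0 < D) {y N : ℕ}
    (h : ⌊(y : ℝ) / D⌋ ≤ N) : y ≤ ⌊D * (N + 1)⌋₊ := by
  have hlt : (y : ℝ) / D < N + 1 := mod_cast Int.floor_le_iff.1 h
  exact Nat.le_floor ((div_lt_iff₀' hD0).1 hlt).le

theorem ncard_floor_div_inter_Icc_le {D : ℝ} (hD0 : 0 < D) (N : ℕ) :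
    (({m : ℕ | ∃ y : ℕ, 0 < y ∧ (m : ℤ) = ⌊(y : ℝ) / D⌋} ∩ Icc 1 N).ncard : ℝ) ≤
      D * (N + 1) := by
  set A := {m : ℕ | ∃ y : ℕ, 0 < y ∧ (m : ℤ) = ⌊(y : ℝ) / D⌋}
  set K := ⌊D * ((N : ℝ) + 1)⌋₊
  have himage : A ∩ Icc 1 N ⊆ (fun y : ℕ ↦ ⌊(y : ℝ) / D⌋.toNat) '' Icc 1 K := by
    rintro m ⟨⟨y, hy, hmy⟩, -, hmN⟩
    have hyK : y ≤ K := le_floor_mul_add_one_of_floor_div_le hD0 (hmy ▸ Int.ofNat_le.2 hmN)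
    exact ⟨y, ⟨hy, hyK⟩, by simp only [← hmy, Int.toNat_natCast]⟩
  have hcard : (A ∩ Icc 1 N).ncard ≤ K :=
    calc (A ∩ Icc 1 N).ncard ≤ _ := ncard_le_ncard himage ((finite_Icc 1 K).image _)
      _ ≤ (Icc 1 K).ncard := ncard_image_le (finite_Icc 1 K)
      _ = K := by simp
  calc ((A ∩ Icc 1 N).ncard : ℝ) ≤ K := mod_cast hcard
    _ ≤ D * (N + 1) := Nat.floor_le (by positivity)

/-- Let `0 < D < 1`, `A = {⌊y/D⌋ : y a positive integer}`, and let
`u₁ < u₂ < …` enumerate the positive integers not in `A` (here `u n` is the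
`(n+1)`-st such integer `u_{n+1}`).  Then there exists a fixed `t` such that
`uₙ ≤ (n + t)/(1 − D)` for every `n ≥ 1`. -/
theorem complement_enumeration_bound (D : ℝ) (hD0 : 0 < D) (hD1 : D < 1)
    (A : Set ℕ) (hA : A = {m : ℕ | ∃ y : ℕ, 0 < y ∧ (m : ℤ) = ⌊(y : ℝ) / D⌋})
    (u : ℕ → ℕ) (hu : StrictMono u)
    (hrange : Set.range u = {m : ℕ | 0 < m ∧ m ∉ A}) :
    ∃ t : ℝ, ∀ n : ℕ, (u n : ℝ) ≤ ((n + 1 : ℕ) + t) / (1 - D) := by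
  subst hA
  exact ⟨D, le_div_one_sub_of_ncard_inter_Icc_le hu hrange.ge hD1 fun N ↦
    (ncard_floor_div_inter_Icc_le hD0 N).trans_eq (mul_add_one D (N : ℝ))⟩
end

section
/- Let α be a real number with 1 − log 2/log 3 ≤ α ≤ 1. There exists a closed set F ⊆ ℝ with Hausdorff dimension at most α such that for every r ∈ [0,1], the (α − 1 + log 2/log 3)-dimensional Hausdorff measure of (𝒞 + r) ∩ F is strictly positive. -/
open MeasureTheory
open scoped ENNReal

/-!
Write `α = 1 - (1 - θ) log₃ 2` with `θ ∈ [0, 1]`, so that the exponent of the measure is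
`θ log₃ 2`, and split the digits of the points of `𝒞` into two classes: those at the positions in a
set `P` of density `θ`, which stay free, and the others, which steer the point into `F`.

Reading the free digits in base `2` is a `θ log₃ 2`-Hölder map, so as soon as every choice of the
free digits is realised by a point of `(𝒞 + r) ∩ F`, a Hölder image of this intersection contains
`[0, 1)` and its `θ log₃ 2`-dimensional measure is positive.

Cut the digits into blocks. In a block of length `ℓ` there are about `2 ^ ((1 - θ) ℓ)` choices of
the steering digits, so a greedy covering argument gives a set of only `O(ℓ 3 ^ (α ℓ))` block values
which the steering digits can reach whatever `r` and the free digits contribute to the block. `F`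
consists of the numbers all of whose blocks take values in these sets; since the block lengths tend
to infinity, the factor `ℓ` does not affect the dimension.
-/

section GreedyCovering

open Finset

variable {α β : Type*} {r : α → β → Prop} [∀ a b, Decidable (r a b)] {t : Finset β} {d : ℕ}

lemma exists_mul_card_le_card_mul_bipartiteBelow {s : Finset α} (ht : t.Nonempty)
    (hd : ∀ a ∈ s, d ≤ #(t.bipartiteAbove r a)) :
    ∃ b ∈ t, #s * d ≤ #t * #(s.bipartiteBelow r b) := by
  refine exists_le_of_sum_le (f := fun _ ↦ #s * d) ht ?_
  calc ∑ _b ∈ t, #s * d = #t * (#s * d) := sum_const_nat fun _ _ ↦ rfl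
    _ ≤ #t * ∑ a ∈ s, #(t.bipartiteAbove r a) := by
        gcongr
        simpa only [smul_eq_mul] using card_nsmul_le_sum s _ d hd
    _ = ∑ b ∈ t, #t * #(s.bipartiteBelow r b) := by
        rw [sum_card_bipartiteAbove_eq_sum_card_bipartiteBelow, mul_sum]

lemma exists_card_filter_not_bipartite_le (ht : t.Nonempty) (hdt : d ≤ #t) (n : ℕ)
    (s : Finset α) (hd : ∀ a ∈ s, d ≤ #(t.bipartiteAbove r a)) :
    ∃ D : Finset β, #D ≤ n ∧ (#{a ∈ s | ∀ b ∈ D, ¬ r a b} : ℝ) ≤ #s * (1 - d / #t) ^ n := by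
  classical
  induction n generalizing s with
  | zero => exact ⟨∅, by simp⟩
  | succ n ih =>
    obtain ⟨b, -, hb⟩ := exists_mul_card_le_card_mul_bipartiteBelow ht hd
    obtain ⟨D, hDcard, hD⟩ := ih {a ∈ s | ¬ r a b} fun a ha ↦ hd a (mem_of_mem_filter a ha)
    refine ⟨insert b D, (card_insert_le b D).trans (by gcongr), ?_⟩
    have ht₀ : (0 : ℝ) < #t := mod_cast ht.card_pos
    have hratio : (0 : ℝ) ≤ 1 - d / #t :=
      sub_nonneg.2 <| (div_le_one ht₀).2 <| mod_cast hdt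
    have huncovered : (#{a ∈ s | ¬ r a b} : ℝ) ≤ #s * (1 - d / #t) := by
      have hsplit : (#(s.bipartiteBelow r b) : ℝ) + #{a ∈ s | ¬ r a b} = #s :=
        mod_cast card_filter_add_card_filter_not (s := s) fun a ↦ r a b
      have hb' : (#s * d / #t : ℝ) ≤ #(s.bipartiteBelow r b) :=
        (div_le_iff₀' ht₀).2 <| mod_cast hb
      calc (#{a ∈ s | ¬ r a b} : ℝ) ≤ #s - #s * d / #t := by linarith
        _ = #s * (1 - d / #t) := by ring
    calc (#{a ∈ s | ∀ b' ∈ insert b D, ¬ r a b'} : ℝ)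
        = #{a ∈ {a ∈ s | ¬ r a b} | ∀ b' ∈ D, ¬ r a b'} := by
          simp only [filter_filter, forall_mem_insert]
      _ ≤ #{a ∈ s | ¬ r a b} * (1 - d / #t) ^ n := hD
      _ ≤ #s * (1 - d / #t) * (1 - d / #t) ^ n := by gcongr
      _ = #s * (1 - d / #t) ^ (n + 1) := by ring

/-- The Stein–Lovász covering bound: greedily picking the vertex with the most uncovered neighbours
shrinks the uncovered part by the factor `1 - d / #t` at each step. -/
lemma exists_cover_card_le_log (s : Finset α) (hd₀ : 0 < d)
    (hd : ∀ a ∈ s, d ≤ #(t.bipartiteAbove r a)) :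
    ∃ D : Finset β, (#D : ℝ) ≤ #t / d * Real.log #s + 1 ∧ ∀ a ∈ s, ∃ b ∈ D, r a b := by
  rcases s.eq_empty_or_nonempty with rfl | hs
  · exact ⟨∅, by simp⟩
  have hdt : d ≤ #t := by
    obtain ⟨a, ha⟩ := hs
    exact (hd a ha).trans (card_filter_le _ _)
  have ht₀ : 0 < #t := hd₀.trans_le hdt
  have hs₀ : (0 : ℝ) < #s := mod_cast hs.card_pos
  set x : ℝ := #t / d * Real.log #s
  have hx : 0 ≤ x := by positivity
  obtain ⟨D, hDcard, hD⟩ := exists_card_filter_not_bipartite_le (card_pos.1 ht₀) hdt (⌊x⌋₊ + 1) s hd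
  refine ⟨D, ?_, ?_⟩
  · calc (#D : ℝ) ≤ ⌊x⌋₊ + 1 := mod_cast hDcard
      _ ≤ x + 1 := by gcongr; exact Nat.floor_le hx
  · have hlog : Real.log #s < d / #t * (⌊x⌋₊ + 1) := calc
      Real.log #s = d / #t * x := by simp only [x]; field_simp
      _ < d / #t * (⌊x⌋₊ + 1) := by gcongr; exact Nat.lt_floor_add_one x
    have hlt : (#{a ∈ s | ∀ b ∈ D, ¬ r a b} : ℝ) < 1 := calc
      (#{a ∈ s | ∀ b ∈ D, ¬ r a b} : ℝ) ≤ #s * (1 - d / #t) ^ (⌊x⌋₊ + 1) := hD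
      _ ≤ #s * Real.exp (-(d / #t)) ^ (⌊x⌋₊ + 1) := by
          gcongr
          · exact sub_nonneg.2 <| (div_le_one (mod_cast ht₀)).2 <| mod_cast hdt
          · exact Real.one_sub_le_exp_neg _
      _ = #s * Real.exp (-(d / #t * (⌊x⌋₊ + 1))) := by
          rw [← Real.exp_nat_mul]; push_cast; ring_nf
      _ < #s * Real.exp (-Real.log #s) := by gcongr
      _ = 1 := by rw [Real.exp_neg, Real.exp_log hs₀, mul_inv_cancel₀ hs₀.ne']
    have hempty : {a ∈ s | ∀ b ∈ D, ¬ r a b} = ∅ := by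
      rw [← card_eq_zero]; exact Nat.lt_one_iff.1 (mod_cast hlt)
    simpa [filter_eq_empty_iff] using hempty

end GreedyCovering

section CantorPoint

open Finset

/-- The point of the middle-thirds Cantor set whose ternary digit is `2` at the positions in `A` and
`0` elsewhere; position `i` has weight `3⁻⁽ⁱ⁺¹⁾`. -/
noncomputable def cantorPoint (A : Set ℕ) : ℝ :=
  Real.ofDigits (A.indicator fun _ ↦ (2 : Fin 3))

/-- The integer whose ternary digits, most significant first, are the digits of `cantorPoint A` at
the positions `m, …, n - 1`. -/
noncomputable def blockValue (A : Set ℕ) (m n : ℕ) : ℕ :=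
  ∑ i ∈ Ico m n, A.indicator (fun i ↦ 2 * 3 ^ (n - 1 - i)) i

variable {A B : Set ℕ} {l m n : ℕ}

lemma cantorPoint_mem_ternaryCantorSet (A : Set ℕ) : cantorPoint A ∈ ternaryCantorSet := by
  refine ⟨A.indicator fun _ ↦ 2, fun n ↦ ?_, ?_⟩
  · by_cases hn : n ∈ A <;> simp [hn]
  · refine tsum_congr fun n ↦ ?_
    by_cases hn : n ∈ A <;> simp [Real.ofDigitsTerm, hn, div_eq_mul_inv]

lemma blockValue_self (A : Set ℕ) (m : ℕ) : blockValue A m m = 0 := by simp [blockValue]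

lemma blockValue_congr (h : ∀ i ∈ Ico m n, i ∈ A ↔ i ∈ B) :
    blockValue A m n = blockValue B m n :=
  sum_congr rfl fun i hi ↦ Set.indicator_eq_indicator (h i hi) rfl

lemma blockValue_union (h : Disjoint A B) :
    blockValue (A ∪ B) m n = blockValue A m n + blockValue B m n := by
  simp only [blockValue, Set.indicator_union_of_disjoint h, sum_add_distrib]

lemma blockValue_succ (A : Set ℕ) (h : m ≤ n) :
    blockValue A m (n + 1) = 3 * blockValue A m n + A.indicator (fun _ ↦ 2) n := by
  have hshift : ∀ i ∈ Ico m n, A.indicator (fun i ↦ 2 * 3 ^ (n + 1 - 1 - i)) i =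
      3 * A.indicator (fun i ↦ 2 * 3 ^ (n - 1 - i)) i := by
    intro i hi
    have hexp : n + 1 - 1 - i = n - 1 - i + 1 := by grind
    by_cases hiA : i ∈ A
    · simp only [hiA, Set.indicator_of_mem, hexp, pow_succ]; ring
    · simp only [hiA, Set.indicator_of_notMem, not_false_eq_true, mul_zero]
  rw [blockValue, sum_Ico_succ_top h, sum_congr rfl hshift, ← mul_sum, blockValue]
  exact congrArg _ (Set.indicator_eq_indicator Iff.rfl (by simp))

lemma blockValue_eq_add (A : Set ℕ) (hlm : l ≤ m) (hmn : m ≤ n) :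
    blockValue A l n = 3 ^ (n - m) * blockValue A l m + blockValue A m n := by
  induction n, hmn using Nat.le_induction with
  | base => simp [blockValue_self]
  | succ n hmn ih =>
    rw [blockValue_succ A (hlm.trans hmn), blockValue_succ A hmn, ih, Nat.sub_add_comm hmn]
    ring

lemma blockValue_lt (A : Set ℕ) (h : m ≤ n) : blockValue A m n < 3 ^ (n - m) := by
  induction n, h using Nat.le_induction with
  | base => simp [blockValue_self]
  | succ n h ih =>
    have hdigit : A.indicator (fun _ ↦ 2) n ≤ 2 := Set.indicator_apply_le' (by simp) (by simp)
    rw [blockValue_succ A h, Nat.sub_add_comm h, pow_succ]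
    lia

lemma mem_iff_mem_of_blockValue_eq (hmn : m ≤ n) (h : blockValue A m n = blockValue B m n) :
    ∀ i ∈ Ico m n, i ∈ A ↔ i ∈ B := by
  induction n, hmn using Nat.le_induction with
  | base => simp
  | succ n hmn ih =>
    rw [blockValue_succ A hmn, blockValue_succ B hmn] at h
    have hn : blockValue A m n = blockValue B m n ∧ (n ∈ A ↔ n ∈ B) := by
      by_cases hA : n ∈ A <;> by_cases hB : n ∈ B <;> simp [hA, hB] at h ⊢ <;> lia
    intro i hi
    rcases Nat.lt_succ_iff_lt_or_eq.1 (mem_Ico.1 hi).2 with hin | rfl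
    · exact ih hn.1 i (mem_Ico.2 ⟨(mem_Ico.1 hi).1, hin⟩)
    · exact hn.2

lemma injOn_blockValue_powerset {s : Finset ℕ} (hs : s ⊆ Ico m n) (hmn : m ≤ n) :
    Set.InjOn (fun B : Finset ℕ ↦ blockValue B m n) s.powerset := by
  intro B hB C hC h
  have hBs := (mem_powerset.1 hB).trans hs
  have hCs := (mem_powerset.1 hC).trans hs
  have hiff := mem_iff_mem_of_blockValue_eq hmn h
  ext i
  exact ⟨fun hi ↦ (hiff i (hBs hi)).1 hi, fun hi ↦ (hiff i (hCs hi)).2 hi⟩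

lemma sum_ofDigitsTerm_indicator (A : Set ℕ) (n : ℕ) :
    ∑ i ∈ range n, Real.ofDigitsTerm (A.indicator fun _ ↦ (2 : Fin 3)) i =
      blockValue A 0 n / 3 ^ n := by
  induction n with
  | zero => simp [blockValue_self]
  | succ n ih =>
    rw [sum_range_succ, ih, blockValue_succ A n.zero_le]
    by_cases hn : n ∈ A <;> simp [Real.ofDigitsTerm, hn] <;> field

lemma cantorPoint_mem_Icc (A : Set ℕ) (n : ℕ) :
    cantorPoint A ∈ Set.Icc (blockValue A 0 n / 3 ^ n : ℝ) ((blockValue A 0 n + 1) / 3 ^ n) := by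
  set tail := Real.ofDigits fun i ↦ A.indicator (fun _ ↦ (2 : Fin 3)) (i + n)
  have hsplit : cantorPoint A = (blockValue A 0 n + tail) / 3 ^ n := by
    rw [cantorPoint, Real.ofDigits_eq_sum_add_ofDigits _ n, sum_ofDigitsTerm_indicator]
    simp only [tail]
    push_cast
    ring
  have hnonneg : 0 ≤ tail := Real.ofDigits_nonneg _
  have hle : tail ≤ 1 := Real.ofDigits_le_one _
  rw [hsplit]
  constructor <;> gcongr
  linarith

lemma inv_pow_le_dist_cantorPoint {k : ℕ} (hlt : ∀ i < k, i ∈ A ↔ i ∈ B)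
    (hk : ¬(k ∈ A ↔ k ∈ B)) : ((3 : ℝ) ^ (k + 1))⁻¹ ≤ dist (cantorPoint A) (cantorPoint B) := by
  wlog hkA : k ∈ A generalizing A B
  · rw [dist_comm]
    exact this (fun i hi ↦ (hlt i hi).symm) (fun h ↦ hk h.symm) (by tauto)
  have hkB : k ∉ B := by tauto
  have hval : blockValue A 0 (k + 1) = blockValue B 0 (k + 1) + 2 := by
    rw [blockValue_succ A k.zero_le, blockValue_succ B k.zero_le,
      blockValue_congr (B := B) fun i hi ↦ hlt i (mem_Ico.1 hi).2]
    simp [hkA, hkB]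
  have hA := (cantorPoint_mem_Icc A (k + 1)).1
  have hB := (cantorPoint_mem_Icc B (k + 1)).2
  rw [hval] at hA
  calc ((3 : ℝ) ^ (k + 1))⁻¹
      = ((blockValue B 0 (k + 1) + 2 : ℕ) : ℝ) / 3 ^ (k + 1)
          - (blockValue B 0 (k + 1) + 1) / 3 ^ (k + 1) := by push_cast; ring
    _ ≤ cantorPoint A - cantorPoint B := by linarith
    _ ≤ dist (cantorPoint A) (cantorPoint B) := le_abs_self _

end CantorPoint

section SturmianSet

open Finset

/-- The `i` at which `⌈θ i⌉` jumps, i.e. the support of a Sturmian word of slope `θ`. It has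
density `θ` with bounded error on every interval, which makes the exponents below exact. -/
def sturmianSet (θ : ℝ) : Set ℕ := {i | ⌈θ * i⌉₊ < ⌈θ * (i + 1)⌉₊}

variable {θ : ℝ} [DecidablePred (· ∈ sturmianSet θ)]

lemma count_sturmianSet (hθ : θ ∈ Set.Icc (0 : ℝ) 1) (k : ℕ) :
    Nat.count (· ∈ sturmianSet θ) k = ⌈θ * k⌉₊ := by
  obtain ⟨hθ₀, hθ₁⟩ := hθ
  induction k with
  | zero => simp
  | succ k ih =>
    have hmono : ⌈θ * k⌉₊ ≤ ⌈θ * (k + 1)⌉₊ := Nat.ceil_le_ceil (by linarith)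
    have hstep : ⌈θ * (k + 1)⌉₊ ≤ ⌈θ * k⌉₊ + 1 := by
      rw [Nat.ceil_le]
      push_cast
      linarith [Nat.le_ceil (θ * k)]
    rw [Nat.count_succ, ih, Nat.cast_succ]
    split_ifs with hk <;> simp only [sturmianSet, Set.mem_ofPred_eq] at hk <;> lia

lemma card_Ico_filter_notMem_sturmianSet_ge (hθ : θ ∈ Set.Icc (0 : ℝ) 1) {m n : ℕ} (hmn : m ≤ n) :
    (1 - θ) * (n - m : ℕ) - 1 ≤ #{i ∈ Ico m n | i ∉ sturmianSet θ} := by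
  have hcount : Nat.count (· ∈ sturmianSet θ) n =
      Nat.count (· ∈ sturmianSet θ) m + #{i ∈ Ico m n | i ∈ sturmianSet θ} := by
    simp only [Nat.count_eq_card_filter_range, card_filter, range_eq_Ico,
      sum_Ico_consecutive _ m.zero_le hmn]
  have hcard : #{i ∈ Ico m n | i ∈ sturmianSet θ} + #{i ∈ Ico m n | i ∉ sturmianSet θ} = n - m := by
    rw [card_filter_add_card_filter_not, Nat.card_Ico]
  rw [count_sturmianSet hθ, count_sturmianSet hθ] at hcount
  have hlt : (⌈θ * n⌉₊ : ℝ) < θ * n + 1 :=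
    Nat.ceil_lt_add_one (mul_nonneg hθ.1 n.cast_nonneg)
  have hle : θ * m ≤ ⌈θ * m⌉₊ := Nat.le_ceil _
  rify [hmn] at hcount hcard ⊢
  linarith

end SturmianSet

section BlockDigits

open Finset

lemma log_two_mul_three_pow_le (n : ℕ) : Real.log (2 * 3 ^ n) ≤ 2 * n + 1 := by
  rw [Real.log_mul (by norm_num) (by positivity), Real.log_pow]
  nlinarith [Real.log_le_sub_one_of_pos (show (0 : ℝ) < 2 by norm_num),
    Real.log_le_sub_one_of_pos (show (0 : ℝ) < 3 by norm_num), n.cast_nonneg (α := ℝ)]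

lemma exists_finset_forall_add_blockValue_mem {s : Finset ℕ} {m n : ℕ} (hmn : m ≤ n)
    (hs : s ⊆ Ico m n) :
    ∃ D : Finset ℕ, (#D : ℝ) ≤ 6 * ((n - m : ℕ) + 1) * (3 ^ (n - m) / 2 ^ #s) ∧
      ∀ k < 2 * 3 ^ (n - m), ∃ B ⊆ s, k + blockValue B m n ∈ D := by
  classical
  set ℓ := n - m
  let r (k f : ℕ) : Prop := ∃ B ∈ s.powerset, k + blockValue B m n = f
  have hdegree : ∀ k ∈ range (2 * 3 ^ ℓ), 2 ^ #s ≤ #((range (3 * 3 ^ ℓ)).bipartiteAbove r k) := by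
    intro k hk
    have hinj : Set.InjOn (fun B : Finset ℕ ↦ k + blockValue B m n) s.powerset :=
      (add_right_injective k).comp_injOn (injOn_blockValue_powerset hs hmn)
    rw [← card_powerset, ← card_image_of_injOn hinj]
    refine card_le_card fun f hf ↦ ?_
    obtain ⟨B, hB, rfl⟩ := mem_image.1 hf
    have hBlt := blockValue_lt B hmn
    have hklt := mem_range.1 hk
    exact mem_filter.2 ⟨mem_range.2 (by lia), B, hB, rfl⟩
  obtain ⟨D, hDcard, hD⟩ := exists_cover_card_le_log _ (by positivity) hdegree
  refine ⟨D, ?_, fun k hk ↦ ?_⟩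
  · have hratio : (1 : ℝ) ≤ 3 ^ ℓ / 2 ^ #s := by
      have hsℓ : #s ≤ ℓ := (card_le_card hs).trans_eq (Nat.card_Ico m n)
      rw [one_le_div (by positivity)]
      calc (2 : ℝ) ^ #s ≤ 2 ^ ℓ := by gcongr; norm_num
        _ ≤ 3 ^ ℓ := by gcongr; norm_num
    have hlog := log_two_mul_three_pow_le ℓ
    simp only [card_range] at hDcard
    push_cast at hDcard
    calc (#D : ℝ) ≤ 3 * 3 ^ ℓ / 2 ^ #s * Real.log (2 * 3 ^ ℓ) + 1 := hDcard
      _ ≤ 3 * 3 ^ ℓ / 2 ^ #s * (2 * ℓ + 1) + 3 ^ ℓ / 2 ^ #s := by gcongr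
      _ = (6 * ℓ + 4) * (3 ^ ℓ / 2 ^ #s) := by ring
      _ ≤ 6 * (ℓ + 1) * (3 ^ ℓ / 2 ^ #s) := by gcongr; linarith
  · obtain ⟨f, hf, B, hB, rfl⟩ := hD k (mem_range.2 hk)
    exact ⟨B, mem_powerset.1 hB, hf⟩

lemma exists_finset_forall_add_blockValue_mem_of_sturmianSet {θ : ℝ} (hθ : θ ∈ Set.Icc (0 : ℝ) 1)
    {m n : ℕ} (hmn : m ≤ n) :
    ∃ D : Finset ℕ,
      (#D : ℝ) ≤ 12 * ((n - m : ℕ) + 1) * (3 ^ (1 - (1 - θ) * Real.logb 3 2)) ^ (n - m) ∧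
      ∀ k < 2 * 3 ^ (n - m), ∃ B ⊆ Set.Ico m n \ sturmianSet θ, k + blockValue B m n ∈ D := by
  classical
  obtain ⟨D, hDcard, hD⟩ := exists_finset_forall_add_blockValue_mem hmn
    (filter_subset (· ∉ sturmianSet θ) (Ico m n))
  refine ⟨D, hDcard.trans ?_, fun k hk ↦ ?_⟩
  · set ℓ := n - m
    set q := #{i ∈ Ico m n | i ∉ sturmianSet θ}
    have hq : (2 : ℝ) ^ ((1 - θ) * ℓ) / 2 ≤ 2 ^ q := by
      rw [← Real.rpow_sub_one two_ne_zero, ← Real.rpow_natCast]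
      gcongr
      · norm_num
      · exact card_Ico_filter_notMem_sturmianSet_ge hθ hmn
    have hpow : ((3 : ℝ) ^ (1 - (1 - θ) * Real.logb 3 2)) ^ ℓ = 3 ^ ℓ / 2 ^ ((1 - θ) * ℓ) := by
      rw [Real.rpow_sub three_pos, Real.rpow_one, div_pow, mul_comm (1 - θ),
        Real.rpow_mul zero_le_three, Real.rpow_logb three_pos (by norm_num) two_pos,
        Real.rpow_mul_natCast zero_le_two]
    calc 6 * ((ℓ : ℝ) + 1) * (3 ^ ℓ / 2 ^ q)
        ≤ 6 * (ℓ + 1) * (3 ^ ℓ / (2 ^ ((1 - θ) * ℓ) / 2)) := by gcongr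
      _ = 12 * (ℓ + 1) * (3 ^ (1 - (1 - θ) * Real.logb 3 2)) ^ ℓ := by rw [hpow]; ring
  · obtain ⟨B, hB, hmem⟩ := hD k hk
    exact ⟨B, fun i hi ↦ by simpa using hB hi, hmem⟩

end BlockDigits

section DimensionOfBlockSet

open Finset Filter Topology

lemma dimH_le_of_tendsto_cover {X ι : Type*} [MetricSpace X] {F : Set X} {α : ℝ}
    {S : ℕ → Finset ι} {U : ℕ → ι → Set X} {δ : ℕ → ℝ} (hδ₀ : ∀ M, 0 ≤ δ M)
    (hδ : Tendsto δ atTop (𝓝 0)) (hdiam : ∀ M i, Metric.ediam (U M i) ≤ ENNReal.ofReal (δ M))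
    (hcover : ∀ M, F ⊆ ⋃ i ∈ S M, U M i)
    (hS : ∀ d : ℝ, 0 ≤ d → α < d → Tendsto (fun M ↦ #(S M) * δ M ^ d) atTop (𝓝 0)) :
    dimH F ≤ ENNReal.ofReal α := by
  borelize X
  refine dimH_le fun d htop ↦ ?_
  by_contra! hlt
  have hαd : α < d := lt_of_not_ge fun hle ↦ hlt.not_ge <| by
    simpa using ENNReal.ofReal_le_ofReal hle
  have hsum (M : ℕ) : ∑ i : S M, Metric.ediam (U M i) ^ (d : ℝ) ≤
      ENNReal.ofReal (#(S M) * δ M ^ (d : ℝ)) := by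
    calc ∑ i : S M, Metric.ediam (U M i) ^ (d : ℝ)
        ≤ ∑ _i : S M, ENNReal.ofReal (δ M) ^ (d : ℝ) := by gcongr; exact hdiam M _
      _ = ENNReal.ofReal (#(S M) * δ M ^ (d : ℝ)) := by
        rw [ENNReal.ofReal_mul (by positivity), ENNReal.ofReal_natCast,
          ← ENNReal.ofReal_rpow_of_nonneg (hδ₀ M) d.coe_nonneg]
        simp
  have hlim : Tendsto (fun M ↦ ∑ i : S M, Metric.ediam (U M i) ^ (d : ℝ)) atTop (𝓝 0) :=
    tendsto_of_tendsto_of_tendsto_of_le_of_le tendsto_const_nhds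
      (by simpa using ENNReal.tendsto_ofReal (hS d d.coe_nonneg hαd)) (fun _ ↦ zero_le) hsum
  have hle : μH[d] F ≤ 0 := by
    rw [← hlim.liminf_eq]
    refine Measure.hausdorffMeasure_le_liminf_sum (d : ℝ) F (fun M ↦ ENNReal.ofReal (δ M))
      (by simpa using ENNReal.tendsto_ofReal hδ) (fun M (i : S M) ↦ U M i)
      (.of_forall fun M i ↦ hdiam M i) (.of_forall fun M ↦ ?_)
    simpa [Set.iUnion_subtype] using hcover M
  simp [htop] at hle

lemma tendsto_div_pow_of_le_mul_pow {ℓ : ℕ → ℕ} (hℓ : Tendsto ℓ atTop atTop) {c : ℕ → ℝ}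
    {C a b : ℝ} (ha : 0 ≤ a) (hab : a < b) (hc₀ : ∀ M, 0 ≤ c M)
    (hc : ∀ M, c M ≤ C * (ℓ M + 1) * a ^ ℓ M) :
    Tendsto (fun M ↦ c M / b ^ ℓ M) atTop (𝓝 0) := by
  have hb : 0 < b := ha.trans_lt hab
  have hratio₀ : 0 ≤ a / b := by positivity
  have hratio₁ : a / b < 1 := (div_lt_one hb).2 hab
  have hlim : Tendsto (fun n : ℕ ↦ C * (n * (a / b) ^ n + (a / b) ^ n)) atTop (𝓝 0) := by
    simpa using ((tendsto_self_mul_const_pow_of_lt_one hratio₀ hratio₁).add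
      (tendsto_pow_atTop_nhds_zero_of_lt_one hratio₀ hratio₁)).const_mul C
  refine squeeze_zero (fun M ↦ div_nonneg (hc₀ M) (by positivity)) (fun M ↦ ?_) (hlim.comp hℓ)
  calc c M / b ^ ℓ M
      ≤ C * (ℓ M + 1) * a ^ ℓ M / b ^ ℓ M := by gcongr; exact hc M
    _ = C * (ℓ M * (a / b) ^ ℓ M + (a / b) ^ ℓ M) := by rw [div_pow]; ring

/-- Stage `M` of the construction of `blockSet`: the numerators of the left endpoints of its
intervals, over the denominator `3 ^ N M`. Each one extends a numerator of the previous stage by a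
block of `N (M + 1) - N M` ternary digits, whose value is taken from `D M`. -/
def blockStage (N : ℕ → ℕ) (D : ℕ → Finset ℕ) : ℕ → Finset ℕ
  | 0 => {0, 1}
  | M + 1 => image₂ (fun x d ↦ 3 ^ (N (M + 1) - N M) * x + d) (blockStage N D M) (D M)

/-- The closed set cut out by prescribing the blocks of ternary digits between the positions `N M`.
Its intervals have length `2 / 3 ^ N M` to leave room for the carry in `cantorPoint A + r`. -/
def blockSet (N : ℕ → ℕ) (D : ℕ → Finset ℕ) : Set ℝ :=
  ⋂ M, ⋃ x ∈ blockStage N D M, Set.Icc ((x : ℝ) / 3 ^ N M) ((x + 2) / 3 ^ N M)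

variable {N : ℕ → ℕ} {D : ℕ → Finset ℕ}

lemma isClosed_blockSet (N : ℕ → ℕ) (D : ℕ → Finset ℕ) : IsClosed (blockSet N D) :=
  isClosed_iInter fun _ ↦ isClosed_biUnion_finset fun _ _ ↦ isClosed_Icc

lemma tendsto_card_blockStage_mul_rpow {d : ℝ} (hN : Monotone N)
    (hD : Tendsto (fun M ↦ #(D M) / ((3 : ℝ) ^ d) ^ (N (M + 1) - N M)) atTop (𝓝 0)) :
    Tendsto (fun M ↦ #(blockStage N D M) / ((3 : ℝ) ^ d) ^ N M) atTop (𝓝 0) := by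
  refine (summable_of_ratio_norm_eventually_le one_half_lt_one ?_).tendsto_atTop_zero
  filter_upwards [hD.eventually_le_const one_half_pos] with M hM
  have hcard : (#(blockStage N D (M + 1)) : ℝ) ≤ #(blockStage N D M) * #(D M) :=
    mod_cast card_image₂_le _ _ _
  rw [Real.norm_of_nonneg (by positivity), Real.norm_of_nonneg (by positivity)]
  calc #(blockStage N D (M + 1)) / ((3 : ℝ) ^ d) ^ N (M + 1)
      ≤ #(blockStage N D M) * #(D M) / ((3 : ℝ) ^ d) ^ (N M + (N (M + 1) - N M)) := by
        rw [Nat.add_sub_cancel' (hN M.le_succ)]; gcongr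
    _ = #(D M) / ((3 : ℝ) ^ d) ^ (N (M + 1) - N M) *
          (#(blockStage N D M) / ((3 : ℝ) ^ d) ^ N M) := by rw [pow_add]; ring
    _ ≤ 1 / 2 * (#(blockStage N D M) / ((3 : ℝ) ^ d) ^ N M) := by gcongr

lemma dimH_blockSet_le {α : ℝ} (hN : StrictMono N)
    (hD : ∀ d > α, Tendsto (fun M ↦ #(D M) / ((3 : ℝ) ^ d) ^ (N (M + 1) - N M)) atTop (𝓝 0)) :
    dimH (blockSet N D) ≤ ENNReal.ofReal α := by
  refine dimH_le_of_tendsto_cover (S := blockStage N D) (δ := fun M ↦ 2 / 3 ^ N M)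
    (fun M ↦ by positivity) ?_ (fun M x ↦ ?_) (fun M ↦ Set.iInter_subset _ M) fun d _ hd ↦ ?_
  · exact tendsto_const_nhds.div_atTop
      ((tendsto_pow_atTop_atTop_of_one_lt (by norm_num)).comp hN.tendsto_atTop)
  · rw [Real.ediam_Icc, add_div, add_sub_cancel_left]
  · have hscale (M : ℕ) : #(blockStage N D M) * ((2 : ℝ) / 3 ^ N M) ^ d =
        2 ^ d * (#(blockStage N D M) / ((3 : ℝ) ^ d) ^ N M) := by
      rw [Real.div_rpow zero_le_two (by positivity), ← Real.rpow_natCast_mul zero_le_three,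
        mul_comm (N M : ℝ), Real.rpow_mul_natCast zero_le_three]
      ring
    simp only [hscale]
    simpa using (tendsto_card_blockStage_mul_rpow hN.monotone (hD d hd)).const_mul (2 ^ d)

end DimensionOfBlockSet

section TranslatesMeetBlockSet

open Finset

variable {N : ℕ → ℕ} {D : ℕ → Finset ℕ}

lemma floor_three_pow_mul_div {m n : ℕ} (hmn : m ≤ n) (r : ℝ) :
    ⌊3 ^ n * r⌋₊ / 3 ^ (n - m) = ⌊3 ^ m * r⌋₊ := by
  have hdiv : (3 : ℝ) ^ m * r = 3 ^ n * r / (3 ^ (n - m) : ℕ) := by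
    rw [← Nat.add_sub_cancel' hmn, pow_add, Nat.add_sub_cancel_left]
    push_cast
    field_simp
  rw [hdiv, Nat.floor_div_natCast]

lemma blockValue_union_iUnion (hN : Monotone N) {Q : Set ℕ} {B : ℕ → Set ℕ}
    (hB : ∀ M, B M ⊆ Set.Ico (N M) (N (M + 1)) \ Q) (M : ℕ) :
    blockValue (Q ∪ ⋃ K, B K) (N M) (N (M + 1)) =
      blockValue Q (N M) (N (M + 1)) + blockValue (B M) (N M) (N (M + 1)) := by
  rw [← blockValue_union (Set.disjoint_left.2 fun i hQ hi ↦ (hB M hi).2 hQ)]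
  refine blockValue_congr fun i hi ↦ or_congr_right ⟨fun hiB ↦ ?_, Set.mem_iUnion_of_mem M⟩
  obtain ⟨K, hK⟩ := Set.mem_iUnion.1 hiB
  obtain rfl : M = K := hN.pairwise_disjoint_on_Ico_succ.eq
    (Set.not_disjoint_iff.2 ⟨i, mem_Ico.1 hi, (hB K hK).1⟩)
  exact hK

lemma floor_add_blockValue_mem_blockStage (hN : Monotone N) (hN₀ : N 0 = 0) {A : Set ℕ} {r : ℝ}
    (hr : r ≤ 1)
    (hA : ∀ M, ⌊3 ^ N (M + 1) * r⌋₊ % 3 ^ (N (M + 1) - N M) +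
      blockValue A (N M) (N (M + 1)) ∈ D M) (M : ℕ) :
    ⌊3 ^ N M * r⌋₊ + blockValue A 0 (N M) ∈ blockStage N D M := by
  induction M with
  | zero =>
    have hfloor : ⌊r⌋₊ ≤ 1 := Nat.floor_le_one_of_le_one hr
    simp only [hN₀, pow_zero, one_mul, blockValue_self, blockStage, mem_insert, mem_singleton]
    lia
  | succ M ih =>
    have hle := hN M.le_succ
    have hdivmod := Nat.div_add_mod ⌊3 ^ N (M + 1) * r⌋₊ (3 ^ (N (M + 1) - N M))
    rw [floor_three_pow_mul_div hle] at hdivmod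
    rw [blockValue_eq_add A (N M).zero_le hle, ← hdivmod, add_add_add_comm, ← mul_add]
    exact mem_image₂_of_mem ih (hA M)

lemma cantorPoint_add_mem_blockSet {A : Set ℕ} {r : ℝ} (hr : 0 ≤ r)
    (hA : ∀ M, ⌊3 ^ N M * r⌋₊ + blockValue A 0 (N M) ∈ blockStage N D M) :
    cantorPoint A + r ∈ blockSet N D := by
  refine Set.mem_iInter.2 fun M ↦ Set.mem_biUnion (hA M) ?_
  have hpow : (0 : ℝ) < 3 ^ N M := by positivity
  obtain ⟨hlower, hupper⟩ := cantorPoint_mem_Icc A (N M)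
  have hfloor_le := Nat.floor_le (mul_nonneg hpow.le hr)
  have hlt_floor := Nat.lt_floor_add_one (3 ^ N M * r)
  rw [div_le_iff₀ hpow] at hlower
  rw [le_div_iff₀ hpow] at hupper
  push_cast
  constructor
  · rw [div_le_iff₀ hpow]; linarith
  · rw [le_div_iff₀ hpow]; linarith

lemma exists_inter_eq_cantorPoint_add_mem_blockSet (hN : Monotone N) (hN₀ : N 0 = 0) {P : Set ℕ}
    (hD : ∀ M, ∀ k < 2 * 3 ^ (N (M + 1) - N M), ∃ B ⊆ Set.Ico (N M) (N (M + 1)) \ P,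
      k + blockValue B (N M) (N (M + 1)) ∈ D M)
    {r : ℝ} (hr : r ∈ Set.Icc (0 : ℝ) 1) {Q : Set ℕ} (hQ : Q ⊆ P) :
    ∃ A : Set ℕ, A ∩ P = Q ∧ cantorPoint A + r ∈ blockSet N D := by
  have hlt (M : ℕ) : ⌊3 ^ N (M + 1) * r⌋₊ % 3 ^ (N (M + 1) - N M) +
      blockValue Q (N M) (N (M + 1)) < 2 * 3 ^ (N (M + 1) - N M) := by
    have hmod := Nat.mod_lt ⌊3 ^ N (M + 1) * r⌋₊ (Nat.pow_pos three_pos (n := N (M + 1) - N M))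
    have hval := blockValue_lt Q (hN M.le_succ)
    lia
  choose B hB hBD using fun M ↦ hD M _ (hlt M)
  refine ⟨Q ∪ ⋃ M, B M, ?_, cantorPoint_add_mem_blockSet hr.1
    (floor_add_blockValue_mem_blockStage hN hN₀ hr.2 fun M ↦ ?_)⟩
  · have hBP : (⋃ M, B M) ∩ P = ∅ := by
      rw [← Set.disjoint_iff_inter_eq_empty, Set.disjoint_iUnion_left]
      exact fun M ↦ Set.disjoint_left.2 fun i hi ↦ (hB M hi).2
    rw [Set.union_inter_distrib_right, hBP, Set.union_empty, Set.inter_eq_left.2 hQ]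
  · rw [blockValue_union_iUnion hN (fun K ↦ (hB K).trans (Set.sdiff_subset_sdiff_right hQ)),
      ← add_assoc]
    exact hBD M

end TranslatesMeetBlockSet

section HausdorffMeasurePos

lemma hausdorffMeasure_image_pos_of_holder {ι X : Type*} [MetricSpace X] [MeasurableSpace X]
    [BorelSpace X] {s : Set ι} {f : ι → X} {g : ι → ℝ} {C β : ℝ} (hC : 0 ≤ C) (hβ : 0 < β)
    (hfg : ∀ a ∈ s, ∀ b ∈ s, dist (g a) (g b) ≤ C * dist (f a) (f b) ^ β)
    (hg : volume (g '' s) ≠ 0) : 0 < μH[β] (f '' s) := by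
  have hfactors : (s.domRestrict g).FactorsThrough (s.domRestrict f) := by
    intro a b (hab : f a = f b)
    simpa [hab, Real.zero_rpow hβ.ne'] using hfg a a.2 b b.2
  obtain ⟨h, hh⟩ : ∃ h : X → ℝ, ∀ a ∈ s, g a = h (f a) := by
    obtain ⟨h, hh⟩ := (Function.factorsThrough_iff _).1 hfactors
    exact ⟨h, fun a ha ↦ congr_fun hh ⟨a, ha⟩⟩
  have hholder : HolderOnWith C.toNNReal β.toNNReal h (f '' s) := by
    rintro _ ⟨a, ha, rfl⟩ _ ⟨b, hb, rfl⟩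
    rw [← hh a ha, ← hh b hb, edist_dist, edist_dist, Real.coe_toNNReal β hβ.le, ← ENNReal.ofReal,
      ENNReal.ofReal_rpow_of_nonneg dist_nonneg hβ.le, ← ENNReal.ofReal_mul hC]
    exact ENNReal.ofReal_le_ofReal (hfg a ha b hb)
  have himage : g '' s = h '' (f '' s) := by
    rw [Set.image_image]
    exact Set.image_congr hh
  have hle := hholder.hausdorffMeasure_image_le (Real.toNNReal_pos.2 hβ) zero_le_one
  rw [← himage, hausdorffMeasure_real, mul_one, Real.coe_toNNReal β hβ.le] at hle
  refine pos_iff_ne_zero.2 fun hzero ↦ hg ?_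
  simpa [hzero] using hle

/-- The real number whose binary digits record membership in `A` along the increasing enumeration
of `P`. -/
noncomputable def traceValue (P A : Set ℕ) : ℝ :=
  Real.ofDigits fun j ↦ A.indicator (fun _ ↦ (1 : Fin 2)) (Nat.nth (· ∈ P) j)

variable {P : Set ℕ}

lemma dist_traceValue_le [DecidablePred (· ∈ P)] {A B : Set ℕ} {k : ℕ}
    (h : ∀ i < k, i ∈ A ↔ i ∈ B) :
    dist (traceValue P A) (traceValue P B) ≤ (2 ^ Nat.count (· ∈ P) k)⁻¹ :=
  Real.abs_ofDigits_sub_ofDigits_le (b := 2) fun _ hj ↦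
    Set.indicator_eq_indicator (h _ (Nat.nth_lt_of_lt_count hj)) rfl

lemma exists_subset_traceValue_eq (hP : P.Infinite) {x : ℝ} (hx : x ∈ Set.Ico (0 : ℝ) 1) :
    ∃ Q ⊆ P, ∀ A, A ∩ P = Q → traceValue P A = x := by
  refine ⟨(Nat.nth (· ∈ P)) '' {j | Real.digits x 2 j = 1}, ?_, fun A hA ↦ ?_⟩
  · rintro _ ⟨j, -, rfl⟩
    exact Nat.nth_mem_of_infinite hP j
  rw [← Real.ofDigits_digits one_lt_two hx, traceValue]
  congr 1
  ext j : 1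
  have hmem : Nat.nth (· ∈ P) j ∈ A ↔ Real.digits x 2 j = 1 := by
    have hjP : Nat.nth (· ∈ P) j ∈ P := Nat.nth_mem_of_infinite hP j
    rw [← and_iff_left (a := _ ∈ A) hjP, ← Set.mem_inter_iff, hA,
      (Nat.nth_injective (p := (· ∈ P)) hP).mem_set_image, Set.mem_ofPred_eq]
  by_cases hj : Real.digits x 2 j = 1
  · rw [Set.indicator_of_mem (hmem.2 hj), hj]
  · rw [Set.indicator_of_notMem (hmem.not.2 hj)]
    lia

lemma inv_two_pow_le_mul_rpow {θ : ℝ} {k n : ℕ} (h : θ * k ≤ n) :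
    ((2 : ℝ) ^ n)⁻¹ ≤ 2 ^ θ * (((3 : ℝ) ^ (k + 1))⁻¹) ^ (θ * Real.logb 3 2) := by
  have hthree : (3 : ℝ) ^ (θ * Real.logb 3 2) = 2 ^ θ := by
    rw [mul_comm, Real.rpow_mul zero_le_three,
      Real.rpow_logb three_pos (by norm_num) two_pos]
  calc ((2 : ℝ) ^ n)⁻¹ ≤ (2 ^ (θ * k))⁻¹ := by
        rw [← Real.rpow_natCast]
        gcongr
        exact one_le_two
    _ = 2 ^ θ * ((2 ^ θ) ^ (k + 1))⁻¹ := by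
        rw [Real.rpow_mul_natCast zero_le_two, pow_succ]
        field_simp
    _ = 2 ^ θ * (((3 : ℝ) ^ (k + 1))⁻¹) ^ (θ * Real.logb 3 2) := by
        rw [Real.inv_rpow (by positivity), ← Real.rpow_pow_comm zero_le_three, hthree]

lemma dist_traceValue_le_mul_rpow [DecidablePred (· ∈ P)] {θ : ℝ} (hθ : 0 ≤ θ)
    (hP : ∀ k : ℕ, θ * k ≤ Nat.count (· ∈ P) k) (A B : Set ℕ) :
    dist (traceValue P A) (traceValue P B) ≤
      2 ^ θ * dist (cantorPoint A) (cantorPoint B) ^ (θ * Real.logb 3 2) := by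
  classical
  obtain rfl | hAB := eq_or_ne A B
  · rw [dist_self]
    positivity
  have hdiff : ∃ k, ¬ (k ∈ A ↔ k ∈ B) := by simpa [Set.ext_iff] using hAB
  have hfirst (i : ℕ) (hi : i < Nat.find hdiff) : i ∈ A ↔ i ∈ B := not_not.1 (Nat.find_min hdiff hi)
  have hlogb : 0 ≤ Real.logb 3 2 := Real.logb_nonneg (by norm_num) one_le_two
  calc dist (traceValue P A) (traceValue P B)
      ≤ (2 ^ Nat.count (· ∈ P) (Nat.find hdiff))⁻¹ := dist_traceValue_le hfirst
    _ ≤ 2 ^ θ * ((3 ^ (Nat.find hdiff + 1))⁻¹) ^ (θ * Real.logb 3 2) :=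
        inv_two_pow_le_mul_rpow (hP _)
    _ ≤ 2 ^ θ * dist (cantorPoint A) (cantorPoint B) ^ (θ * Real.logb 3 2) := by
        gcongr
        exact inv_pow_le_dist_cantorPoint hfirst (Nat.find_spec hdiff)

lemma infinite_of_mul_le_count [DecidablePred (· ∈ P)] {θ : ℝ} (hθ : 0 < θ)
    (hP : ∀ k : ℕ, θ * k ≤ Nat.count (· ∈ P) k) : P.Infinite := by
  intro hfin
  obtain ⟨k, hk⟩ := exists_nat_gt (hfin.toFinset.card / θ)
  rw [div_lt_iff₀' hθ] at hk
  have hcard : Nat.count (· ∈ P) k ≤ hfin.toFinset.card := Nat.count_le_card (p := (· ∈ P)) hfin k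
  exact absurd (hk.trans_le (hP k)) (by exact_mod_cast hcard.not_gt)

lemma hausdorffMeasure_image_cantorPoint_pos [DecidablePred (· ∈ P)] {θ : ℝ} (hθ : 0 ≤ θ)
    (hP : ∀ k : ℕ, θ * k ≤ Nat.count (· ∈ P) k) {𝒜 : Set (Set ℕ)}
    (h𝒜 : ∀ Q ⊆ P, ∃ A ∈ 𝒜, A ∩ P = Q) :
    0 < μH[θ * Real.logb 3 2] (cantorPoint '' 𝒜) := by
  obtain rfl | hθ := hθ.eq_or_lt
  · obtain ⟨A, hA, -⟩ := h𝒜 P subset_rfl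
    rw [zero_mul]
    exact zero_lt_one.trans_le
      (Measure.one_le_hausdorffMeasure_zero_of_nonempty ⟨_, Set.mem_image_of_mem _ hA⟩)
  · have hβ : 0 < θ * Real.logb 3 2 := mul_pos hθ (Real.logb_pos (by norm_num) one_lt_two)
    have hsurj : Set.Ico (0 : ℝ) 1 ⊆ traceValue P '' 𝒜 := fun x hx ↦ by
      obtain ⟨Q, hQ, htrace⟩ := exists_subset_traceValue_eq (infinite_of_mul_le_count hθ hP) hx
      obtain ⟨A, hA, rfl⟩ := h𝒜 Q hQ
      exact ⟨A, hA, htrace A rfl⟩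
    have hvol : volume (traceValue P '' 𝒜) ≠ 0 :=
      ((by simp : 0 < volume (Set.Ico (0 : ℝ) 1)).trans_le (measure_mono hsurj)).ne'
    exact hausdorffMeasure_image_pos_of_holder (by positivity) hβ
      (fun A _ B _ ↦ dist_traceValue_le_mul_rpow hθ.le hP A B) hvol

end HausdorffMeasurePos

lemma exists_mem_Icc_eq_one_sub_mul_logb {α : ℝ} (hα₁ : 1 - Real.logb 3 2 ≤ α) (hα₂ : α ≤ 1) :
    ∃ θ ∈ Set.Icc (0 : ℝ) 1, α = 1 - (1 - θ) * Real.logb 3 2 := by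
  have hlogb : 0 < Real.logb 3 2 := Real.logb_pos (by norm_num) one_lt_two
  refine ⟨1 - (1 - α) / Real.logb 3 2, ⟨?_, ?_⟩, ?_⟩
  · rw [sub_nonneg, div_le_one hlogb]
    linarith
  · linarith [div_nonneg (sub_nonneg.2 hα₂) hlogb.le]
  · field_simp
    ring

lemma hausdorffMeasure_image_cantorPoint_le_translate_inter (β r : ℝ) (F : Set ℝ) :
    μH[β] (cantorPoint '' {A | cantorPoint A + r ∈ F}) ≤
      μH[β] ((· + r) '' ternaryCantorSet ∩ F) := by
  rw [← (IsometryEquiv.addRight r).hausdorffMeasure_image]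
  refine measure_mono ?_
  rintro _ ⟨_, ⟨A, hA, rfl⟩, rfl⟩
  exact ⟨⟨_, cantorPoint_mem_ternaryCantorSet A, rfl⟩, hA⟩

/-- Let `1 − log 2/log 3 ≤ α ≤ 1`.  There is a closed set `F ⊆ ℝ` with
`dim_H F ≤ α` such that for every `r ∈ [0,1]`,
`ℋ^{α − 1 + log 2/log 3}((𝒞 + r) ∩ F) > 0`. -/
theorem exists_closed_lowDim_positive_measure_meeting_translates (α : ℝ)
    (hα₁ : 1 - Real.log 2 / Real.log 3 ≤ α) (hα₂ : α ≤ 1) :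
    ∃ F : Set ℝ, IsClosed F ∧ dimH F ≤ ENNReal.ofReal α ∧
      ∀ r ∈ Set.Icc (0 : ℝ) 1,
        0 < μH[α - 1 + Real.log 2 / Real.log 3]
          (((· + r) '' ternaryCantorSet) ∩ F) := by
  classical
  rw [Real.log_div_log] at hα₁ ⊢
  obtain ⟨θ, hθ, rfl⟩ := exists_mem_Icc_eq_one_sub_mul_logb hα₁ hα₂
  have hN : StrictMono fun M : ℕ ↦ M ^ 2 := Nat.pow_left_strictMono two_ne_zero
  choose D hcard hD using fun M : ℕ ↦
    exists_finset_forall_add_blockValue_mem_of_sturmianSet hθ (hN.monotone M.le_succ)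
  have hlength : Filter.Tendsto (fun M : ℕ ↦ (M + 1) ^ 2 - M ^ 2) .atTop .atTop :=
    Filter.tendsto_atTop_mono (fun M ↦ Nat.le_sub_of_add_le (by rw [id, add_sq]; lia))
      Filter.tendsto_id
  refine ⟨blockSet (· ^ 2) D, isClosed_blockSet _ D, dimH_blockSet_le hN fun d hd ↦ ?_,
    fun r hr ↦ ?_⟩
  · exact tendsto_div_pow_of_le_mul_pow hlength (by positivity)
      (Real.rpow_lt_rpow_of_exponent_lt (by norm_num) hd) (fun M ↦ by positivity) hcard
  have hcount (k : ℕ) : θ * k ≤ Nat.count (· ∈ sturmianSet θ) k :=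
    count_sturmianSet hθ k ▸ Nat.le_ceil _
  have hexp : 1 - (1 - θ) * Real.logb 3 2 - 1 + Real.logb 3 2 = θ * Real.logb 3 2 := by ring
  rw [hexp]
  refine (hausdorffMeasure_image_cantorPoint_pos hθ.1 hcount fun Q hQ ↦ ?_).trans_le
    (hausdorffMeasure_image_cantorPoint_le_translate_inter _ r _)
  obtain ⟨A, hA, hmem⟩ :=
    exists_inter_eq_cantorPoint_add_mem_blockSet hN.monotone (by simp) hD hr hQ
  exact ⟨A, hmem, hA⟩
end

section
/- Let α be a real number with 1 − log 2/log 3 ≤ α ≤ 1, and let E ⊆ ℝ be a set with Hausdorff dimension at most α. Then for Lebesgue-almost every x ∈ ℝ, the Hausdorff dimension of (𝒞 + x) ∩ E is at most α − 1 + log 2/log 3. -/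
open MeasureTheory

/-!
If `A ⊆ ℝⁿ` is covered by `O(r ^ (-γ))` balls of radius `r`, then the translates of `A` that meet a
set `U` of diameter `r` form the set `U - A`, which is covered by `O(r ^ (-γ))` balls of radius
`2 * r` and so has volume `O(r ^ (n - γ))`. Hence if `E` has a cover by sets `Uᵢ` with
`∑ diam(Uᵢ) ^ t` small, the integral over `x` of the sum of `diam(Uᵢ) ^ (t - (n - γ))` over those
`Uᵢ` that meet `A + x` is also small. By Fatou's lemma along a sequence of such covers,
`(A + x) ∩ E` is null for the Hausdorff measure of dimension `t - (n - γ)`, for almost every `x`.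
-/

open Set Filter Topology Metric Module
open scoped ENNReal NNReal Pointwise

section HausdorffMeasure

variable {X : Type*} [EMetricSpace X] [MeasurableSpace X] [BorelSpace X]

lemma exists_cover_tsum_ediam_rpow_lt {t : ℝ} (ht : 0 < t) {E : Set X} (hE : μH[t] E = 0)
    {r ε : ℝ≥0∞} (hr : 0 < r) (hε : 0 < ε) :
    ∃ U : ℕ → Set X, E ⊆ ⋃ i, U i ∧ (∀ i, ediam (U i) ≤ r) ∧ ∑' i, ediam (U i) ^ t < ε := by
  rw [Measure.hausdorffMeasure_apply] at hE
  have hcover := ((iSup₂_le_iff.1 hE.le) r hr).trans_lt hε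
  simp only [iInf_lt_iff] at hcover
  obtain ⟨U, hEU, hUr, hsum⟩ := hcover
  refine ⟨U, hEU, hUr, (ENNReal.tsum_le_tsum fun i => ?_).trans_lt hsum⟩
  rcases (U i).eq_empty_or_nonempty with hempty | hnonempty
  · simp [hempty, ENNReal.zero_rpow_of_pos ht]
  · exact le_iSup_of_le hnonempty le_rfl

lemma ae_dimH_le_of_forall_gt_hausdorffMeasure_eq_zero {Ω : Type*} [MeasurableSpace Ω]
    {μ : Measure Ω} {S : Ω → Set X} {d : ℝ≥0∞}
    (hS : ∀ s : ℝ≥0, d < s → ∀ᵐ ω ∂μ, μH[s] (S ω) = 0) :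
    ∀ᵐ ω ∂μ, dimH (S ω) ≤ d := by
  have hrat : ∀ᵐ ω ∂μ, ∀ q : ℚ, d < Real.toNNReal q → μH[Real.toNNReal q] (S ω) = 0 :=
    ae_all_iff.2 fun q => eventually_imp_distrib_left.2 (hS _)
  filter_upwards [hrat] with ω hω
  by_contra! hlt
  obtain ⟨q, -, hdq, hqS⟩ := ENNReal.lt_iff_exists_rat_btwn.1 hlt
  exact ENNReal.zero_ne_top ((hω q hdq).symm.trans (hausdorffMeasure_of_lt_dimH hqS))

end HausdorffMeasure

lemma ennreal_rpow_mul_rpow_sub_le {s : ℝ} (hs : 0 < s) (t : ℝ) {d : ℝ≥0∞} (hd : d ≠ ∞) :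
    d ^ s * d ^ (t - s) ≤ d ^ t := by
  rcases eq_or_ne d 0 with rfl | hd₀
  · simp [ENNReal.zero_rpow_of_pos hs]
  · rw [← ENNReal.rpow_add _ _ hd₀ hd, add_sub_cancel]

section HittingSet

variable {Ω X : Type*}

/-- The set of parameters `ω` for which the member `A ω` of a family of sets (in the application, a
translate) meets the fixed set `U`. -/
def hittingSet (A : Ω → Set X) (U : Set X) : Set Ω := {ω | (A ω ∩ U).Nonempty}

variable [MeasurableSpace Ω] [EMetricSpace X]

/-- The sum of `diam(Uᵢ) ^ s` over those `i` for which `A ω` meets `Uᵢ`: a measurable majorant of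
the sum that bounds the `s`-dimensional Hausdorff measure of `A ω ∩ ⋃ᵢ Uᵢ`. The hitting sets need
not be measurable, so each is replaced by its measurable hull. -/
noncomputable def hittingSum (μ : Measure Ω) (A : Ω → Set X) (s : ℝ) (U : ℕ → Set X) (ω : Ω) :
    ℝ≥0∞ :=
  ∑' i, (toMeasurable μ (hittingSet A (U i))).indicator (fun _ => ediam (U i) ^ s) ω

variable {μ : Measure Ω} {A : Ω → Set X} {s t : ℝ} {C δ : ℝ≥0∞}

lemma measurable_hittingSum (U : ℕ → Set X) : Measurable (hittingSum μ A s U) :=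
  Measurable.tsum fun _ => measurable_const.indicator (measurableSet_toMeasurable _ _)

lemma tsum_ediam_inter_rpow_le_hittingSum (hs : 0 < s) (U : ℕ → Set X) (ω : Ω) :
    ∑' i, ediam (A ω ∩ U i) ^ s ≤ hittingSum μ A s U ω := by
  refine ENNReal.tsum_le_tsum fun i => ?_
  rcases (A ω ∩ U i).eq_empty_or_nonempty with hmiss | hhit
  · simp [hmiss, ENNReal.zero_rpow_of_pos hs]
  · have hω : ω ∈ toMeasurable μ (hittingSet A (U i)) := subset_toMeasurable _ _ hhit
    rw [indicator_of_mem hω]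
    gcongr
    exact inter_subset_right

lemma lintegral_hittingSum_le (hs : 0 < s)
    (hhit : ∀ U, ediam U < δ → μ (hittingSet A U) ≤ C * ediam U ^ (t - s))
    {U : ℕ → Set X} (hU : ∀ i, ediam (U i) < δ) :
    ∫⁻ ω, hittingSum μ A s U ω ∂μ ≤ C * ∑' i, ediam (U i) ^ t := by
  unfold hittingSum
  rw [lintegral_tsum fun i =>
    (measurable_const.indicator (measurableSet_toMeasurable _ _)).aemeasurable,
    ← ENNReal.tsum_mul_left]
  refine ENNReal.tsum_le_tsum fun i => ?_
  rw [lintegral_indicator_const (measurableSet_toMeasurable _ _), measure_toMeasurable]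
  calc ediam (U i) ^ s * μ (hittingSet A (U i))
      ≤ ediam (U i) ^ s * (C * ediam (U i) ^ (t - s)) := by gcongr; exact hhit _ (hU i)
    _ = C * (ediam (U i) ^ s * ediam (U i) ^ (t - s)) := by ring
    _ ≤ C * ediam (U i) ^ t := by gcongr; exact ennreal_rpow_mul_rpow_sub_le hs t (hU i).ne_top

theorem ae_hausdorffMeasure_inter_eq_zero [MeasurableSpace X] [BorelSpace X]
    (hs : 0 < s) (ht : 0 < t) (hC : C ≠ ∞) (hδ : 0 < δ)
    (hhit : ∀ U, ediam U < δ → μ (hittingSet A U) ≤ C * ediam U ^ (t - s))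
    {E : Set X} (hE : μH[t] E = 0) :
    ∀ᵐ ω ∂μ, μH[s] (A ω ∩ E) = 0 := by
  have hpow : Tendsto (fun k : ℕ => (2⁻¹ : ℝ≥0∞) ^ k) atTop (𝓝 0) :=
    ENNReal.tendsto_pow_atTop_nhds_zero_of_lt_one (by simp)
  have hpow_pos (k : ℕ) : (0 : ℝ≥0∞) < 2⁻¹ ^ k := ENNReal.pow_pos (by simp) k
  choose U hEU hUdiam hUsum using fun k =>
    exists_cover_tsum_ediam_rpow_lt ht hE (hpow_pos k) (hpow_pos k)
  have hmean : Tendsto (fun k => ∫⁻ ω, hittingSum μ A s (U k) ω ∂μ) atTop (𝓝 0) := by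
    have hbound : Tendsto (fun k : ℕ => C * 2⁻¹ ^ k) atTop (𝓝 0) := by
      simpa using ENNReal.Tendsto.const_mul hpow (Or.inr hC)
    refine tendsto_of_tendsto_of_tendsto_of_le_of_le' tendsto_const_nhds hbound
      (Eventually.of_forall fun _ => zero_le) ?_
    filter_upwards [hpow.eventually_lt_const hδ] with k hk
    grw [lintegral_hittingSum_le hs hhit fun i => (hUdiam k i).trans_lt hk, hUsum k]
  have hliminf : ∀ᵐ ω ∂μ, liminf (fun k => hittingSum μ A s (U k) ω) atTop = 0 := by
    refine (lintegral_eq_zero_iff (.liminf fun k => measurable_hittingSum (U k))).1 ?_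
    exact nonpos_iff_eq_zero.1 <|
      (lintegral_liminf_le fun k => measurable_hittingSum (U k)).trans_eq hmean.liminf_eq
  filter_upwards [hliminf] with ω hω
  refine nonpos_iff_eq_zero.1 ?_
  calc μH[s] (A ω ∩ E)
      ≤ liminf (fun k => ∑' i, ediam (A ω ∩ U k i) ^ s) atTop :=
        Measure.hausdorffMeasure_le_liminf_tsum s _ _ hpow (fun k i => A ω ∩ U k i)
          (.of_forall fun k i => (ediam_mono inter_subset_right).trans (hUdiam k i))
          (.of_forall fun k => by rw [← inter_iUnion]; gcongr; exact hEU k)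
    _ ≤ liminf (fun k => hittingSum μ A s (U k) ω) atTop :=
        liminf_le_liminf (.of_forall fun k => tsum_ediam_inter_rpow_le_hittingSum hs (U k) ω)
    _ = 0 := hω

end HittingSet

section BoxDimension

variable {X : Type*} [PseudoEMetricSpace X]

/-- `A` can be covered by `O(r ^ (-γ))` closed balls of radius `r`, as `r → 0`: the growth condition
on covering numbers that defines the upper box-counting dimension. -/
def IsBoxExponent (A : Set X) (γ : ℝ) : Prop :=
  ∃ K : ℝ≥0, ∀ᶠ r : ℝ≥0 in 𝓝[>] 0, (externalCoveringNumber r A : ℝ≥0∞) ≤ K * (r : ℝ≥0∞) ^ (-γ)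

/-- The upper box-counting dimension `limsup log N(r) / log (1 / r)`, where `N(r)` is the number of
balls of radius `r` needed to cover `A`, encoded as the infimum of the exponents `γ ≥ 0` with
`N(r) = O(r ^ (-γ))`. -/
noncomputable def upperBoxDim (A : Set X) : ℝ≥0∞ := ⨅ (γ : ℝ≥0) (_ : IsBoxExponent A γ), (γ : ℝ≥0∞)

lemma IsBoxExponent.mono_set {A B : Set X} {γ : ℝ} (hAB : A ⊆ B) (hB : IsBoxExponent B γ) :
    IsBoxExponent A γ := by
  obtain ⟨K, hK⟩ := hB
  exact ⟨K, hK.mono fun r hr =>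
    (ENat.toENNReal_mono (externalCoveringNumber_mono_set hAB)).trans hr⟩

lemma IsBoxExponent.upperBoxDim_le {A : Set X} {γ : ℝ} (hA : IsBoxExponent A γ) (hγ : 0 ≤ γ) :
    upperBoxDim A ≤ ENNReal.ofReal γ :=
  iInf₂_le γ.toNNReal (by rwa [Real.coe_toNNReal γ hγ])

lemma exists_isBoxExponent_of_upperBoxDim_lt {A : Set X} {d : ℝ≥0∞} (hd : upperBoxDim A < d) :
    ∃ γ : ℝ≥0, IsBoxExponent A γ ∧ γ < d := by
  simpa only [upperBoxDim, iInf_lt_iff, exists_prop] using hd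

lemma exists_isCover_encard_eq_externalCoveringNumber (r : ℝ≥0) (A : Set X) :
    ∃ F, IsCover r A F ∧ F.encard = externalCoveringNumber r A := by
  have : Nonempty {F : Set X // IsCover r A F} := ⟨A, .rfl⟩
  obtain ⟨⟨F, hF⟩, hcard⟩ := ENat.exists_eq_iInf fun F : {F : Set X // IsCover r A F} => F.1.encard
  exact ⟨F, hF, by rw [hcard, externalCoveringNumber, iInf_subtype']⟩

lemma externalCoveringNumber_union_le (r : ℝ≥0) (A B : Set X) :
    externalCoveringNumber r (A ∪ B) ≤
      externalCoveringNumber r A + externalCoveringNumber r B := by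
  obtain ⟨F, hF, hFcard⟩ := exists_isCover_encard_eq_externalCoveringNumber r A
  obtain ⟨G, hG, hGcard⟩ := exists_isCover_encard_eq_externalCoveringNumber r B
  have hFG : IsCover r (A ∪ B) (F ∪ G) := by
    rintro x (hx | hx)
    exacts [hF.mono subset_union_left hx, hG.mono subset_union_right hx]
  rw [← hFcard, ← hGcard]
  exact hFG.externalCoveringNumber_le_encard.trans (encard_union_le F G)

lemma externalCoveringNumber_image_le_of_lipschitzWith {Y : Type*} [PseudoEMetricSpace Y]
    {f : X → Y} {L : ℝ≥0} (hf : LipschitzWith L f) (r : ℝ≥0) (A : Set X) :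
    externalCoveringNumber (L * r) (f '' A) ≤ externalCoveringNumber r A := by
  obtain ⟨F, hF, hFcard⟩ := exists_isCover_encard_eq_externalCoveringNumber r A
  rw [← hFcard]
  exact (hF.image_lipschitz hf).externalCoveringNumber_le_encard.trans (encard_image_le f F)

end BoxDimension

section Translate

lemma hittingSet_translate {V : Type*} [AddCommGroup V] (A U : Set V) :
    hittingSet (fun x => (· + x) '' A) U = U - A := by
  ext x
  simp only [hittingSet, Set.Nonempty, mem_inter_iff, mem_image, mem_ofPred_eq, Set.mem_sub]
  constructor
  · rintro ⟨u, ⟨a, ha, rfl⟩, hu⟩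
    exact ⟨a + x, hu, a, ha, add_sub_cancel_left a x⟩
  · rintro ⟨u, hu, a, ha, rfl⟩
    exact ⟨u, ⟨a, ha, add_sub_cancel a u⟩, hu⟩

lemma sub_subset_biUnion_closedBall {V : Type*} [SeminormedAddCommGroup V] {A U F : Set V}
    {r : ℝ≥0} (hF : IsCover r A F) (hU : ediam U ≤ r) {u₀ : V} (hu₀ : u₀ ∈ U) :
    U - A ⊆ ⋃ c ∈ F, closedBall (u₀ - c) (2 * r) := by
  rintro _ ⟨u, hu, a, ha, rfl⟩
  obtain ⟨c, hc, hac⟩ := mem_iUnion₂.1 (hF.subset_iUnion_closedBall ha)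
  have huu₀ : dist u u₀ ≤ r := by
    rw [dist_nndist, NNReal.coe_le_coe, ← ENNReal.coe_le_coe, ← edist_nndist]
    exact (edist_le_ediam_of_mem hu hu₀).trans hU
  refine mem_iUnion₂.2 ⟨c, hc, ?_⟩
  calc dist (u - a) (u₀ - c) ≤ dist u u₀ + dist a c := dist_sub_sub_le _ _ _ _
    _ ≤ r + r := add_le_add huu₀ hac
    _ = 2 * r := (two_mul _).symm

variable {V : Type*} [NormedAddCommGroup V] [MeasurableSpace V] [BorelSpace V] {A U : Set V}
  {r : ℝ≥0} (μ : Measure V) [μ.IsAddHaarMeasure]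

lemma addHaar_sub_le_externalCoveringNumber_mul (hr : 0 < r) (hU : ediam U ≤ r) :
    μ (U - A) ≤ externalCoveringNumber r A * μ (closedBall 0 (2 * r)) := by
  rcases U.eq_empty_or_nonempty with rfl | ⟨u₀, hu₀⟩
  · simp
  obtain ⟨F, hF, hFcard⟩ := exists_isCover_encard_eq_externalCoveringNumber r A
  rw [← hFcard]
  rcases F.finite_or_infinite with hfin | hinf
  · calc μ (U - A) ≤ μ (⋃ c ∈ F, closedBall (u₀ - c) (2 * r)) :=
          measure_mono (sub_subset_biUnion_closedBall hF hU hu₀)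
      _ ≤ ∑' c : F, μ (closedBall (u₀ - c) (2 * r)) := measure_biUnion_le μ hfin.countable _
      _ = F.encard * μ (closedBall 0 (2 * r)) := by
          simp_rw [Measure.addHaar_closedBall_center μ _ (2 * r : ℝ)]
          exact ENNReal.tsum_set_const F _
  · have hball : μ (closedBall 0 (2 * r)) ≠ 0 := (measure_closedBall_pos μ 0 (by positivity)).ne'
    simp [hinf.encard_eq, ENNReal.top_mul hball]

variable [NormedSpace ℝ V] [FiniteDimensional ℝ V]

lemma addHaar_sub_le_rpow {γ : ℝ} {K : ℝ≥0∞} (hr : 0 < r) (hU : ediam U ≤ r)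
    (hA : (externalCoveringNumber r A : ℝ≥0∞) ≤ K * (r : ℝ≥0∞) ^ (-γ)) :
    μ (U - A) ≤ K * (2 ^ finrank ℝ V * μ (closedBall 0 1)) * (r : ℝ≥0∞) ^ (finrank ℝ V - γ) := by
  have hball : μ (closedBall 0 (2 * r)) =
      2 ^ finrank ℝ V * (r : ℝ≥0∞) ^ finrank ℝ V * μ (closedBall 0 1) := by
    rw [Measure.addHaar_closedBall' μ 0 (by positivity), ← mul_pow,
      ENNReal.ofReal_pow (by positivity), ENNReal.ofReal_mul zero_le_two,
      ENNReal.ofReal_ofNat, ENNReal.ofReal_coe_nnreal]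
  calc μ (U - A)
      ≤ externalCoveringNumber r A * μ (closedBall 0 (2 * r)) :=
        addHaar_sub_le_externalCoveringNumber_mul μ hr hU
    _ ≤ K * (r : ℝ≥0∞) ^ (-γ) * μ (closedBall 0 (2 * r)) := by gcongr
    _ = K * (2 ^ finrank ℝ V * μ (closedBall 0 1)) *
          ((r : ℝ≥0∞) ^ (finrank ℝ V : ℝ) * (r : ℝ≥0∞) ^ (-γ)) := by
        rw [hball, ENNReal.rpow_natCast]; ring
    _ = _ := by
        rw [← ENNReal.rpow_add _ _ (by simpa using hr.ne') ENNReal.coe_ne_top, sub_eq_add_neg]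

lemma exists_addHaar_sub_le_ediam_rpow {γ : ℝ} (hA : IsBoxExponent A γ) :
    ∃ C ≠ ∞, ∃ δ > 0, ∀ U : Set V, ediam U < δ →
      μ (U - A) ≤ C * ediam U ^ (finrank ℝ V - γ) := by
  obtain ⟨K, hK⟩ := hA
  obtain ⟨δ, hδ, hKδ⟩ := (nhdsGT_basis (0 : ℝ≥0)).eventually_iff.1 hK
  have hC : K * (2 ^ finrank ℝ V * μ (closedBall 0 1)) ≠ ∞ :=
    ENNReal.mul_ne_top ENNReal.coe_ne_top
      (ENNReal.mul_ne_top (by simp) measure_closedBall_lt_top.ne)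
  refine ⟨_, hC, δ, by simpa using hδ, fun U hU => ?_⟩
  lift ediam U to ℝ≥0 using hU.ne_top with d hd
  -- The radius must be positive, so the bound at `r = d` is taken as a limit `r ↓ d`.
  have hlim : Tendsto (fun r : ℝ≥0 => K * (2 ^ finrank ℝ V * μ (closedBall 0 1)) *
      (r : ℝ≥0∞) ^ (finrank ℝ V - γ)) (𝓝[>] d)
      (𝓝 (K * (2 ^ finrank ℝ V * μ (closedBall 0 1)) * (d : ℝ≥0∞) ^ (finrank ℝ V - γ))) :=
    ENNReal.Tendsto.const_mul
      (((ENNReal.continuous_rpow_const.comp ENNReal.continuous_coe).tendsto d).mono_left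
        nhdsWithin_le_nhds) (Or.inr hC)
  refine ge_of_tendsto hlim ?_
  filter_upwards [Ioo_mem_nhdsGT (ENNReal.coe_lt_coe.1 hU)] with r hr
  have hr₀ : 0 < r := pos_of_gt hr.1
  exact addHaar_sub_le_rpow μ hr₀ (hd ▸ ENNReal.coe_le_coe.2 hr.1.le) (hKδ ⟨hr₀, hr.2⟩)

theorem dimH_translate_inter_le_ae_general (A E : Set V) :
    ∀ᵐ x ∂μ, dimH ((· + x) '' A ∩ E) ≤ dimH E + upperBoxDim A - finrank ℝ V := by
  refine ae_dimH_le_of_forall_gt_hausdorffMeasure_eq_zero fun s hs => ?_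
  have hbox : upperBoxDim A < s + finrank ℝ V - dimH E :=
    lt_tsub_iff_left.2
      ((ENNReal.cancel_of_ne (ENNReal.natCast_ne_top _)).lt_add_of_tsub_lt_right hs)
  obtain ⟨γ, hγ, hγlt⟩ := exists_isBoxExponent_of_upperBoxDim_lt hbox
  obtain ⟨t, ht⟩ : ∃ t : ℝ≥0, t = s + finrank ℝ V - γ := ⟨_, rfl⟩
  have hEt : dimH E < t := by
    rw [ht]
    push_cast
    exact lt_tsub_comm.1 hγlt
  have ht₀ : 0 < t := ENNReal.coe_pos.1 (pos_of_gt hEt)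
  have hts : (t : ℝ) - s = finrank ℝ V - γ := by
    rw [ht, NNReal.coe_sub (tsub_pos_iff_lt.1 (ht ▸ ht₀)).le]
    push_cast
    ring
  obtain ⟨C, hC, δ, hδ, hvol⟩ := exists_addHaar_sub_le_ediam_rpow μ hγ
  refine ae_hausdorffMeasure_inter_eq_zero (NNReal.coe_pos.2 (ENNReal.coe_pos.1 (pos_of_gt hs)))
    (NNReal.coe_pos.2 ht₀) hC hδ (fun U hU => ?_) (hausdorffMeasure_of_dimH_lt hEt)
  rw [hittingSet_translate, hts]
  exact hvol U hU

end Translate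

section Cantor

lemma ternaryCantorSet_subset_cantorSet : ternaryCantorSet ⊆ cantorSet := by
  rintro _ ⟨a, ha, rfl⟩
  have hdigits : ∀ n, ∃ d : Fin 3, d ≠ 1 ∧ (d : ℝ) = a n := fun n => by
    rcases ha n with h | h
    exacts [⟨0, by decide, by simp [h]⟩, ⟨2, by decide, by simp [h]⟩]
  choose d hd hda using hdigits
  convert ofDigits_zero_two_sequence_mem_cantorSet hd using 1
  simp only [Real.ofDigits, Real.ofDigitsTerm, hda, Nat.cast_ofNat, div_eq_mul_inv]

lemma lipschitzWith_add_div_three (c : ℝ) : LipschitzWith 3⁻¹ fun x : ℝ => (c + x) / 3 :=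
  LipschitzWith.of_dist_le_mul fun x y => by
    simp only [Real.dist_eq, NNReal.coe_inv, NNReal.coe_ofNat]
    rw [← sub_div, add_sub_add_left_eq_sub, abs_div, abs_of_pos (zero_lt_three' ℝ), div_eq_inv_mul]

lemma externalCoveringNumber_cantorSet_le (n : ℕ) :
    externalCoveringNumber (3⁻¹ ^ n) cantorSet ≤ 2 ^ n := by
  induction n with
  | zero =>
    refine (externalCoveringNumber_mono_set cantorSet_subset_unitInterval).trans ?_
    exact externalCoveringNumber_le_one_of_ediam_le (by simp [Real.ediam_Icc])
  | succ n ih =>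
    have hthird (c : ℝ) : externalCoveringNumber (3⁻¹ ^ (n + 1))
        ((fun x => (c + x) / 3) '' cantorSet) ≤ 2 ^ n := by
      rw [pow_succ']
      exact (externalCoveringNumber_image_le_of_lipschitzWith
        (lipschitzWith_add_div_three c) _ _).trans ih
    rw [cantorSet_eq_union_halves, pow_succ (2 : ℕ∞), mul_two]
    refine (externalCoveringNumber_union_le _ _ _).trans (add_le_add ?_ (hthird 2))
    simpa only [zero_add] using hthird 0

lemma three_rpow_log_two_div_log_three : (3 : ℝ≥0∞) ^ (Real.log 2 / Real.log 3) = 2 := by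
  have h : (3 : ℝ) ^ (Real.log 2 / Real.log 3) = 2 :=
    Real.rpow_logb (by norm_num) (by norm_num) (by norm_num)
  rw [← ENNReal.ofReal_ofNat 3, ENNReal.ofReal_rpow_of_pos (by norm_num), h, ENNReal.ofReal_ofNat]

lemma isBoxExponent_cantorSet : IsBoxExponent cantorSet (Real.log 2 / Real.log 3) := by
  refine ⟨2, ?_⟩
  filter_upwards [Ioo_mem_nhdsGT one_pos] with r hr
  obtain ⟨n, hnr, hrn⟩ := exists_nat_pow_near_of_lt_one hr.1 hr.2.le
    (y := 3⁻¹) (by positivity) (inv_lt_one_of_one_lt₀ (by norm_num))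
  have hcount : (2 : ℝ≥0∞) ^ n ≤ (r : ℝ≥0∞) ^ (-(Real.log 2 / Real.log 3)) := by
    have hrinv : (3 : ℝ≥0∞) ^ n ≤ (r : ℝ≥0∞)⁻¹ := by
      have h : (3 : ℝ≥0) ^ n ≤ r⁻¹ := (le_inv_comm₀ hr.1 (by positivity)).1 (by rwa [← inv_pow])
      rw [← ENNReal.coe_inv hr.1.ne']
      exact_mod_cast h
    calc (2 : ℝ≥0∞) ^ n = (3 ^ n) ^ (Real.log 2 / Real.log 3) := by
          rw [← three_rpow_log_two_div_log_three, ← ENNReal.rpow_natCast, ← ENNReal.rpow_natCast,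
            ← ENNReal.rpow_mul, ← ENNReal.rpow_mul, mul_comm]
      _ ≤ (r : ℝ≥0∞)⁻¹ ^ (Real.log 2 / Real.log 3) := by gcongr
      _ = (r : ℝ≥0∞) ^ (-(Real.log 2 / Real.log 3)) := by rw [ENNReal.inv_rpow, ENNReal.rpow_neg]
  calc (externalCoveringNumber r cantorSet : ℝ≥0∞) ≤ ((2 ^ (n + 1) : ℕ∞) : ℝ≥0∞) :=
        ENat.toENNReal_mono <| (externalCoveringNumber_anti hnr.le).trans
          (externalCoveringNumber_cantorSet_le (n + 1))
    _ = 2 * 2 ^ n := by simp [pow_succ']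
    _ ≤ (2 : ℝ≥0) * (r : ℝ≥0∞) ^ (-(Real.log 2 / Real.log 3)) := by grw [hcount]; simp

lemma upperBoxDim_ternaryCantorSet_le :
    upperBoxDim ternaryCantorSet ≤ ENNReal.ofReal (Real.log 2 / Real.log 3) :=
  (isBoxExponent_cantorSet.mono_set ternaryCantorSet_subset_cantorSet).upperBoxDim_le
    (by positivity)

end Cantor

/-- Let `1 − log 2/log 3 ≤ α ≤ 1` and let `E ⊆ ℝ` with `dim_H E ≤ α`.  Then
for Lebesgue-a.e. `x ∈ ℝ`, `dim_H ((𝒞 + x) ∩ E) ≤ α − 1 + log 2/log 3`. -/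
theorem dimH_translate_inter_le_ae (α : ℝ)
    (hα₁ : 1 - Real.log 2 / Real.log 3 ≤ α) (hα₂ : α ≤ 1)
    (E : Set ℝ) (hE : dimH E ≤ ENNReal.ofReal α) :
    ∀ᵐ x : ℝ,
      dimH (((· + x) '' ternaryCantorSet) ∩ E) ≤
        ENNReal.ofReal (α - 1 + Real.log 2 / Real.log 3) := by
  have hγ : Real.log 2 / Real.log 3 ≤ 1 :=
    div_le_one_of_le₀ (Real.log_le_log (by norm_num) (by norm_num)) (by positivity)
  filter_upwards [dimH_translate_inter_le_ae_general volume ternaryCantorSet E] with x hx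
  calc dimH (((· + x) '' ternaryCantorSet) ∩ E)
      ≤ dimH E + upperBoxDim ternaryCantorSet - finrank ℝ ℝ := hx
    _ ≤ ENNReal.ofReal α + ENNReal.ofReal (Real.log 2 / Real.log 3) - ENNReal.ofReal 1 := by
        rw [finrank_self, Nat.cast_one, ENNReal.ofReal_one]
        gcongr
        exact upperBoxDim_ternaryCantorSet_le
    _ = ENNReal.ofReal (α - 1 + Real.log 2 / Real.log 3) := by
        rw [← ENNReal.ofReal_add (by linarith) (by positivity),
          ← ENNReal.ofReal_sub _ zero_le_one, sub_add_eq_add_sub]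
end
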